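/- Let α ≥ 1 and w_α := e^{−N^α}. Then the weighted sub-Laplacian with domain C_c^∞(G,ℂ) ⊆ L²(G, w_α dy), defined (almost everywhere, the coefficient being defined on G* and locally bounded since α ≥ 1) by φ ↦ L φ + α N^{α−1} (∇_H N) · (∇_H φ), is essentially self-adjoint on L²(G, w_α dy): its closure is self-adjoint (equivalently, its adjoint is self-adjoint). -/

import Mathlib

/-!
Write `P = N⁴`, a polynomial, so that `w_α = exp (-P^{α/4})`, and `b_j = -X_j w_α / w_α`. Then
`T φ = -∑ X_j X_j φ + ∑ b_j X_j φ`, and `|X_j P| ≤ C P^{3/4}` gives `|b_j| ≤ C N^{α-1}`. Thus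
`b_j` is locally bounded, by `α ≥ 1`, and `b_j √w_α` is bounded. The possible singularity of `b_j`
at the origin is handled throughout by replacing `P` with `P + δ`, `δ → 0`.

The fields `X_j` are divergence free, so Green's formula
`⟪T φ, ψ⟫ = ∫ ∑ j, conj (X_j φ) (X_j ψ) w_α` holds (`green`); hence `T` is symmetric and
nonnegative. For such an operator it is enough that `T + 1` has dense range
(`isSelfAdjoint_adjoint`), that is, that any `h ∈ L²(w_α dy)` orthogonal to the range of `T + 1`
is zero. Since `T` has real coefficients, `h` may be taken real.

With `v = h w_α`, orthogonality is the weak equation `∑ X_j (X_j v + b_j v) = v`. The fields `X_j`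
commute with the convolutions `s = ∫ ρ(p · q⁻¹) v(q) dq` and `B_j = ∫ ρ(p · q⁻¹) b_j(q) v(q) dq`,
because they are left invariant, so the smooth functions `s`, `B_j` satisfy
`∑ X_j (X_j s + B_j) = s` pointwise (`moll_eq`): no hypoelliptic regularity theory is needed.
Testing this against `χ² s exp ((P + δ)^{α/4})` with a cutoff `χ` gives the Caccioppoli inequality
`energy`, whose error terms involve `X_j χ` and the commutators `B_j - b_j s`. As the mollifier
concentrates and `δ → 0`, the commutators tend to zero in `L²` on the support of `χ`, because `v`
and `b_j v = (b_j √w_α) (h √w_α)` are in `L²(dy)`. For `g = h √w_α` this leaves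
`‖χ g‖² ≤ 8 ∑ ‖(X_j χ) g‖²` (`local_est`). For cutoffs at Kaplan radius `R` one has
`|X_j χ| ≤ C / R` (`exists_XD_chiR_le`), so `R → ∞` yields `g = 0` (`core`).
-/

open MeasureTheory Filter
open scoped BigOperators ENNReal NNReal

noncomputable section

/-- Points of the Métivier group `G = ℝ^{2n} × ℝ^m`. -/
abbrev GrpPt (n m : ℕ) := (Fin (2*n) → ℝ) × (Fin m → ℝ)

/-- Euclidean norm on `Fin k → ℝ`. -/
def e2norm {k : ℕ} (x : Fin k → ℝ) : ℝ := Real.sqrt (∑ i, (x i)^2)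

/-- Kaplan norm `N(x,t) = (|x|^4 + 16|t|^2)^(1/4)`. -/
def kN {n m : ℕ} (p : GrpPt n m) : ℝ := (e2norm p.1 ^ 4 + 16 * e2norm p.2 ^ 2) ^ ((1:ℝ)/4)

/-- Group multiplication of the Métivier group. -/
def gmul {n m : ℕ} (J : Fin m → Matrix (Fin (2*n)) (Fin (2*n)) ℝ) (p q : GrpPt n m) : GrpPt n m :=
  (p.1 + q.1, p.2 + q.2 + fun k => (1/2 : ℝ) * ∑ i, (J k).mulVec p.1 i * q.1 i)

/-- Horizontal left-invariant vector field `X_j`. -/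
def XD {n m : ℕ} (J : Fin m → Matrix (Fin (2*n)) (Fin (2*n)) ℝ)
    {E : Type*} [NormedAddCommGroup E] [NormedSpace ℝ E]
    (j : Fin (2*n)) (f : GrpPt n m → E) (p : GrpPt n m) : E :=
  fderiv ℝ f p (Pi.single j 1, 0)
    + (1/2 : ℝ) • ∑ k, ((J k).mulVec p.1 j) • fderiv ℝ f p (0, Pi.single k 1)

/-- Squared length of the horizontal gradient. -/
def gradSq {n m : ℕ} (J : Fin m → Matrix (Fin (2*n)) (Fin (2*n)) ℝ)
    (f : GrpPt n m → ℝ) (p : GrpPt n m) : ℝ := ∑ j, (XD J j f p)^2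

/-- Sub-Laplacian `L f = -∑ X_j (X_j f)`. -/
def LSub {n m : ℕ} (J : Fin m → Matrix (Fin (2*n)) (Fin (2*n)) ℝ)
    {E : Type*} [NormedAddCommGroup E] [NormedSpace ℝ E]
    (f : GrpPt n m → E) (p : GrpPt n m) : E := - ∑ j, XD J j (XD J j f) p

/-- Weight `w_α = exp (-N^α)`. -/
def wA {n m : ℕ} (α : ℝ) (p : GrpPt n m) : ℝ := Real.exp (-(kN p ^ α))

/-- Potential `V_α = -(1/4) |grad w_α|²/w_α² - (1/2) (L w_α)/w_α`. -/
def VA {n m : ℕ} (J : Fin m → Matrix (Fin (2*n)) (Fin (2*n)) ℝ) (α : ℝ) (p : GrpPt n m) : ℝ :=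
  -(1/4) * gradSq J (wA α) p / (wA α p)^2 - (1/2) * LSub J (wA α) p / wA α p

/-- The weighted measure `w(y) dy`. -/
def wMeasure {n m : ℕ} (w : GrpPt n m → ℝ) : Measure (GrpPt n m) :=
  (volume : Measure (GrpPt n m)).withDensity (fun y => ENNReal.ofReal (w y))

/-! ### The left-invariant vector fields -/

section VectorFields
open scoped ContDiff Topology

variable {n m : ℕ} (J : Fin m → Matrix (Fin (2*n)) (Fin (2*n)) ℝ)
variable {E : Type*} [NormedAddCommGroup E] [NormedSpace ℝ E]

/-- The direction of the left-invariant field `X_j` at the point `p`, as a tangent vector. -/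
def xiV (j : Fin (2*n)) (p : GrpPt n m) : GrpPt n m :=
  (Pi.single j 1, fun k => (1/2 : ℝ) * (J k).mulVec p.1 j)

lemma XD_eq (j : Fin (2*n)) (f : GrpPt n m → E) (p : GrpPt n m) :
    XD J j f p = fderiv ℝ f p (xiV J j p) := by
  have h : xiV J j p = (Pi.single j 1, 0) + (1/2 : ℝ) • ∑ k : Fin m, ((J k).mulVec p.1 j) •
      ((0, Pi.single k 1) : GrpPt n m) := by
    ext i
    · simp [xiV, Prod.fst_sum]
    · simp [xiV, Prod.snd_sum, Finset.sum_apply, Pi.single_apply]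
  rw [h, map_add, map_smul, map_sum]
  simp only [XD, map_smul]

instance instHaarGrpPt : Measure.IsAddHaarMeasure (volume : Measure (GrpPt n m)) :=
  Measure.prod.instIsAddHaarMeasure _ _

lemma contDiff_mulVec (k : Fin m) (j : Fin (2*n)) :
    ContDiff ℝ ∞ (fun p : GrpPt n m => (J k).mulVec p.1 j) := by
  simp only [Matrix.mulVec, dotProduct]
  fun_prop

lemma contDiff_xiV (j : Fin (2*n)) : ContDiff ℝ ∞ (xiV (n := n) (m := m) J j) := by
  unfold xiV
  have := fun k => contDiff_mulVec (n := n) (m := m) J k j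
  fun_prop

lemma XD_fun_eq (j : Fin (2*n)) (f : GrpPt n m → E) :
    XD J j f = fun p => fderiv ℝ f p (xiV J j p) := funext (XD_eq J j f)

lemma contDiff_XD (j : Fin (2*n)) {f : GrpPt n m → E} (hf : ContDiff ℝ ∞ f) :
    ContDiff ℝ ∞ (XD J j f) := by
  rw [XD_fun_eq]
  exact (hf.fderiv_right (m := ∞) (by simp)).clm_apply (contDiff_xiV J j)

lemma continuous_XD (j : Fin (2*n)) {f : GrpPt n m → E} (hf : ContDiff ℝ 1 f) :
    Continuous (XD J j f) := by
  rw [XD_fun_eq]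
  exact (hf.continuous_fderiv (by simp)).clm_apply (contDiff_xiV J j).continuous

lemma XD_hasCompactSupport (j : Fin (2*n)) {f : GrpPt n m → E} (hf : HasCompactSupport f) :
    HasCompactSupport (XD J j f) := by
  rw [XD_fun_eq]
  refine (hf.fderiv (𝕜 := ℝ)).mono ?_
  intro p hp h0
  apply hp
  simp [h0]

lemma XD_mul (j : Fin (2*n)) {A : Type*} [NormedRing A] [NormedAlgebra ℝ A] {f g : GrpPt n m → A}
    {p : GrpPt n m} (hf : DifferentiableAt ℝ f p) (hg : DifferentiableAt ℝ g p) :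
    XD J j (fun q => f q * g q) p = XD J j f p * g p + f p * XD J j g p := by
  simp only [XD_eq]
  rw [fderiv_fun_mul' hf hg]
  simp [add_comm]

lemma XD_smul (j : Fin (2*n)) {c : GrpPt n m → ℝ} {f : GrpPt n m → E} {p : GrpPt n m}
    (hc : DifferentiableAt ℝ c p) (hf : DifferentiableAt ℝ f p) :
    XD J j (fun q => c q • f q) p = XD J j c p • f p + c p • XD J j f p := by
  simp only [XD_eq]
  rw [fderiv_fun_smul hc hf]
  simp [add_comm]

lemma XD_comp (j : Fin (2*n)) {h : ℝ → ℝ} {f : GrpPt n m → ℝ} {p : GrpPt n m} {h' : ℝ}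
    (hh : HasDerivAt h h' (f p)) (hf : DifferentiableAt ℝ f p) :
    XD J j (fun q => h (f q)) p = h' * XD J j f p := by
  simp only [XD_eq]
  have := (hh.comp_hasFDerivAt p hf.hasFDerivAt).fderiv
  rw [show (fun q => h (f q)) = h ∘ f from rfl, this]
  simp

lemma integral_fderiv_zero [CompleteSpace E] {f : GrpPt n m → E} (hf : ContDiff ℝ 1 f)
    (hc : HasCompactSupport f) (v : GrpPt n m) : ∫ p, fderiv ℝ f p v = 0 := by
  have hcont : Continuous fun p => fderiv ℝ f p v :=
    (hf.continuous_fderiv (by simp)).clm_apply continuous_const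
  have hcs : HasCompactSupport fun p => fderiv ℝ f p v := by
    refine (hc.fderiv (𝕜 := ℝ)).mono fun p hp h0 => hp (by simp [h0])
  have := integral_smul_fderiv_eq_neg_fderiv_smul_of_integrable (𝕜 := ℝ)
    (μ := (volume : Measure (GrpPt n m)))
    (f := fun _ => (1:ℝ)) (g := f) (v := v) (by simp)
    (by simpa using hcont.integrable_of_hasCompactSupport hcs)
    (by simpa using hf.continuous.integrable_of_hasCompactSupport hc)
    (fun x _ => by fun_prop) (fun x _ => (hf.differentiable (by simp)) x)
  simpa using this

/-- The fields `X_j` are divergence free. -/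
lemma integral_XD_zero [CompleteSpace E] (j : Fin (2*n)) {f : GrpPt n m → E}
    (hf : ContDiff ℝ 1 f) (hc : HasCompactSupport f) : ∫ p, XD J j f p = 0 := by
  have hd : Differentiable ℝ f := hf.differentiable (by simp)
  -- the coefficient of `∂_{t_k}` in `X_j` does not depend on `t`
  have key : ∀ k p, ((J k).mulVec p.1 j) • fderiv ℝ f p (0, Pi.single k 1)
      = fderiv ℝ (fun q : GrpPt n m => ((J k).mulVec q.1 j) • f q) p (0, Pi.single k 1) := by
    intro k p
    have hlin : DifferentiableAt ℝ (fun q : GrpPt n m => (J k).mulVec q.1 j) p :=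
      (contDiff_mulVec J k j).differentiable (by simp) p
    rw [fderiv_fun_smul hlin (hd p)]
    have : fderiv ℝ (fun q : GrpPt n m => (J k).mulVec q.1 j) p (0, Pi.single k 1) = 0 := by
      have hl := hlin.hasFDerivAt.hasLineDerivAt (0, Pi.single k 1)
      rw [← hl.lineDeriv, lineDeriv]
      simp
    simp [this]
  have hck : ∀ k, ContDiff ℝ 1 (fun q : GrpPt n m => ((J k).mulVec q.1 j) • f q) := fun k =>
    ((contDiff_mulVec J k j).of_le (by simp)).smul hf
  have hcs : ∀ k, HasCompactSupport (fun q : GrpPt n m => ((J k).mulVec q.1 j) • f q) :=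
    fun k => hc.smul_left
  have h_intg : ∀ (g : GrpPt n m → E) (v : GrpPt n m), ContDiff ℝ 1 g → HasCompactSupport g →
      Integrable fun p => fderiv ℝ g p v := by
    intro g v hg hgc
    refine Continuous.integrable_of_hasCompactSupport
      ((hg.continuous_fderiv (by simp)).clm_apply continuous_const) ?_
    exact (hgc.fderiv (𝕜 := ℝ)).mono fun p hp h0 => hp (by simp [h0])
  simp only [XD, key]
  have hsum : Integrable (fun p : GrpPt n m => (1/2 : ℝ) • ∑ k,
      fderiv ℝ (fun q : GrpPt n m => ((J k).mulVec q.1 j) • f q) p (0, Pi.single k 1)) :=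
    Integrable.smul (1/2 : ℝ)
      (integrable_finsetSum Finset.univ fun k _ => h_intg _ (0, Pi.single k 1) (hck k) (hcs k))
  rw [integral_add (h_intg f _ hf hc) hsum, integral_smul, integral_finsetSum _ fun k _ => h_intg _ _ (hck k) (hcs k),
    integral_fderiv_zero hf hc]
  simp [integral_fderiv_zero (hck _) (hcs _)]

end VectorFields

/-! ### Convolution kernels on the group -/

section Kernel
open scoped ContDiff Topology Convolution

variable {n m : ℕ} (J : Fin m → Matrix (Fin (2*n)) (Fin (2*n)) ℝ)

/-- The group quotient `p · q⁻¹`, using `(x, t)⁻¹ = (-x, -t)`. -/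
def sgQ (p q : GrpPt n m) : GrpPt n m :=
  (p.1 - q.1, fun k => p.2 k - q.2 k - (1/2 : ℝ) * ((J k).mulVec p.1 ⬝ᵥ q.1))

/-- The product `s⁻¹ · p`: the solution `q` of `p · q⁻¹ = s`. -/
def taQ (p s : GrpPt n m) : GrpPt n m :=
  (p.1 - s.1, fun k => p.2 k - s.2 k - (1/2 : ℝ) * ((J k).mulVec p.1 ⬝ᵥ (p.1 - s.1)))

lemma contDiff_sgQ : ContDiff ℝ ∞ (fun z : GrpPt n m × GrpPt n m => sgQ J z.1 z.2) := by
  unfold sgQ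
  simp only [Matrix.mulVec, dotProduct]
  fun_prop

lemma contDiff_taQ : ContDiff ℝ ∞ (fun z : GrpPt n m × GrpPt n m => taQ J z.1 z.2) := by
  unfold taQ
  simp only [Matrix.mulVec, dotProduct]
  fun_prop

lemma taQ_sgQ (p q : GrpPt n m) : taQ J p (sgQ J p q) = q := by
  ext i
  · simp [taQ, sgQ]
  · simp [taQ, sgQ]; ring

lemma skew_dot {J : Fin m → Matrix (Fin (2*n)) (Fin (2*n)) ℝ}
    (hskew : ∀ k, (J k).transpose = -(J k)) (k : Fin m) (x y : Fin (2*n) → ℝ) :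
    (J k).mulVec x ⬝ᵥ y = - ((J k).mulVec y ⬝ᵥ x) := by
  rw [dotProduct_comm, Matrix.dotProduct_mulVec, ← Matrix.mulVec_transpose, hskew,
    Matrix.neg_mulVec, neg_dotProduct]

lemma skew_self {J : Fin m → Matrix (Fin (2*n)) (Fin (2*n)) ℝ}
    (hskew : ∀ k, (J k).transpose = -(J k)) (k : Fin m) (x : Fin (2*n) → ℝ) :
    (J k).mulVec x ⬝ᵥ x = 0 := by
  have := skew_dot hskew k x x
  linarith

lemma taQ_zero {J : Fin m → Matrix (Fin (2*n)) (Fin (2*n)) ℝ}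
    (hskew : ∀ k, (J k).transpose = -(J k)) (p : GrpPt n m) : taQ J p 0 = p := by
  ext i
  · simp [taQ]
  · simp [taQ, skew_self hskew]

variable {J} in
lemma xiV_add_smul (hskew : ∀ k, (J k).transpose = -(J k)) (j : Fin (2*n)) (p r : GrpPt n m)
    (s : ℝ) : xiV J j (p + s • xiV J j r) = xiV J j p := by
  ext i
  · simp [xiV]
  · have := skew_self hskew i (Pi.single j 1)
    simp only [dotProduct_single, mul_one, Matrix.mulVec_single_one, Matrix.col_apply] at this
    simp [xiV, Matrix.mulVec_add, Matrix.mulVec_smul, this]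

variable {J} in
/-- Moving `p` along `X_j` moves `p · q⁻¹` in the direction `X_j` at `p + q`; skew-symmetry of the
`J_k` is what makes this direction symmetric in `p` and `q`. -/
lemma sgQ_left (hskew : ∀ k, (J k).transpose = -(J k)) (j : Fin (2*n)) (p q : GrpPt n m)
    (s : ℝ) : sgQ J (p + s • xiV J j p) q = sgQ J p q + s • xiV J j (p + q) := by
  ext i
  · simp [xiV, sgQ]; ring
  · have := skew_dot hskew i (Pi.single j 1) q.1
    simp only [dotProduct_single, mul_one, Matrix.mulVec_single_one] at this
    simp [xiV, sgQ, Matrix.mulVec_add, Matrix.mulVec_smul, add_dotProduct,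
      this]
    ring

variable {J} in
/-- Moving `q` along `X_j` moves `p · q⁻¹` in the direction opposite to that of `sgQ_left`. -/
lemma sgQ_right (j : Fin (2*n)) (p q : GrpPt n m)
    (s : ℝ) : sgQ J p (q + s • xiV J j q) = sgQ J p q + s • (-xiV J j (p + q)) := by
  ext i
  · simp [xiV, sgQ]; ring
  · simp [xiV, sgQ, Matrix.mulVec_add, dotProduct_add]
    ring

/-- Chain rule along a line: `X_j f` at `p` only depends on `f` along the line through `p` with
direction `xiV J j p`. -/
lemma XD_of_line {E : Type*} [NormedAddCommGroup E] [NormedSpace ℝ E] {j : Fin (2*n)}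
    {f B : GrpPt n m → E} {p y e : GrpPt n m}
    (hf : DifferentiableAt ℝ f p) (hB : DifferentiableAt ℝ B y)
    (h : ∀ s : ℝ, f (p + s • xiV J j p) = B (y + s • e)) : XD J j f p = fderiv ℝ B y e := by
  rw [XD_eq, ← hf.lineDeriv_eq_fderiv, ← hB.lineDeriv_eq_fderiv]
  simp only [lineDeriv, h]

/-- The convolution kernel `ρ(p · q⁻¹)`. -/
def kerQ (ρ : GrpPt n m → ℝ) (p q : GrpPt n m) : ℝ := ρ (sgQ J p q)

/-- The kernel `X_j^p (ρ(p · q⁻¹))`. -/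
def kerX (j : Fin (2*n)) (ρ : GrpPt n m → ℝ) (p q : GrpPt n m) : ℝ :=
  fderiv ℝ ρ (sgQ J p q) (xiV J j (p + q))

lemma contDiff_kerQ {ρ : GrpPt n m → ℝ} (hρ : ContDiff ℝ ∞ ρ) :
    ContDiff ℝ ∞ (fun z : GrpPt n m × GrpPt n m => kerQ J ρ z.1 z.2) :=
  hρ.comp (contDiff_sgQ J)

lemma contDiff_kerX (j : Fin (2*n)) {ρ : GrpPt n m → ℝ} (hρ : ContDiff ℝ ∞ ρ) :
    ContDiff ℝ ∞ (fun z : GrpPt n m × GrpPt n m => kerX J j ρ z.1 z.2) :=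
  ((hρ.fderiv_right (m := ∞) (by simp)).comp (contDiff_sgQ J)).clm_apply
    ((contDiff_xiV J j).comp (contDiff_fst.add contDiff_snd))

lemma kerQ_comp_left {K : GrpPt n m → GrpPt n m → ℝ}
    (hK : ContDiff ℝ ∞ (fun z : GrpPt n m × GrpPt n m => K z.1 z.2)) (q : GrpPt n m) :
    ContDiff ℝ ∞ (fun p => K p q) :=
  hK.comp (contDiff_id.prodMk contDiff_const)

lemma kerQ_comp_right {K : GrpPt n m → GrpPt n m → ℝ}
    (hK : ContDiff ℝ ∞ (fun z : GrpPt n m × GrpPt n m => K z.1 z.2)) (p : GrpPt n m) :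
    ContDiff ℝ ∞ (fun q => K p q) :=
  hK.comp (contDiff_const.prodMk contDiff_id)

variable {J}

lemma XD_kerQ_left (hskew : ∀ k, (J k).transpose = -(J k)) (j : Fin (2*n)) {ρ : GrpPt n m → ℝ}
    (hρ : ContDiff ℝ ∞ ρ) (p q : GrpPt n m) :
    XD J j (fun p' => kerQ J ρ p' q) p = kerX J j ρ p q := by
  refine XD_of_line J ((kerQ_comp_left (contDiff_kerQ J hρ) q).differentiable (by simp) p)
    (hρ.differentiable (by simp) _) fun s => ?_
  rw [kerQ, sgQ_left hskew]

/-- Left invariance of `X_j`: up to sign, it acts in the same way on both variables of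
`ρ(p · q⁻¹)`. -/
lemma XD_kerQ_right (j : Fin (2*n)) {ρ : GrpPt n m → ℝ}
    (hρ : ContDiff ℝ ∞ ρ) (p q : GrpPt n m) :
    XD J j (fun q' => kerQ J ρ p q') q = - kerX J j ρ p q := by
  rw [kerX, ← map_neg]
  refine XD_of_line J ((kerQ_comp_right (contDiff_kerQ J hρ) p).differentiable (by simp) q)
    (hρ.differentiable (by simp) _) fun s => ?_
  rw [kerQ, sgQ_right]

/-- Both second-order derivatives of the kernel are `D²ρ(η, η)` with `η` the common direction. -/
lemma XD_kerX (hskew : ∀ k, (J k).transpose = -(J k)) (j : Fin (2*n)) {ρ : GrpPt n m → ℝ}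
    (hρ : ContDiff ℝ ∞ ρ) (p q : GrpPt n m) :
    XD J j (fun q' => kerX J j ρ p q') q = - XD J j (fun p' => kerX J j ρ p' q) p := by
  have hB : Differentiable ℝ (fun y => fderiv ℝ ρ y (xiV J j (p + q))) :=
    ((hρ.fderiv_right (m := ∞) (by simp)).clm_apply contDiff_const).differentiable (by simp)
  rw [XD_of_line (e := xiV J j (p + q)) (y := sgQ J p q) J
    ((kerQ_comp_left (contDiff_kerX J j hρ) q).differentiable (by simp) p) (hB _) fun s => ?_,
    XD_of_line (e := - xiV J j (p + q)) (y := sgQ J p q) J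
    ((kerQ_comp_right (contDiff_kerX J j hρ) p).differentiable (by simp) q) (hB _) fun s => ?_]
  · simp
  · rw [kerX, sgQ_right, ← add_assoc, xiV_add_smul hskew]
  · rw [kerX, sgQ_left hskew, add_right_comm, xiV_add_smul hskew]

/-- Kernels whose second variable stays in a compact set as long as the first one is bounded. -/
def ProperKer (K : GrpPt n m → GrpPt n m → ℝ) : Prop :=
  ContDiff ℝ ∞ (fun z : GrpPt n m × GrpPt n m => K z.1 z.2) ∧
    ∀ R : ℝ, ∃ C : Set (GrpPt n m), IsCompact C ∧ ∀ p ∈ Metric.ball (0 : GrpPt n m) R, ∀ q ∉ C,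
      K p q = 0

lemma sgQ_compact (J : Fin m → Matrix (Fin (2*n)) (Fin (2*n)) ℝ) {S : Set (GrpPt n m)}
    (hS : IsCompact S) (R : ℝ) : ∃ C : Set (GrpPt n m), IsCompact C ∧
      ∀ p ∈ Metric.ball (0 : GrpPt n m) R, ∀ q ∉ C, sgQ J p q ∉ S := by
  refine ⟨(fun z : GrpPt n m × GrpPt n m => taQ J z.1 z.2) '' (Metric.closedBall 0 R ×ˢ S),
    ((isCompact_closedBall _ _).prod hS).image (contDiff_taQ J).continuous, fun p hp q hq hs => ?_⟩
  exact hq ⟨(p, sgQ J p q), ⟨Metric.ball_subset_closedBall hp, hs⟩, taQ_sgQ J p q⟩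

lemma properKer_kerQ {ρ : GrpPt n m → ℝ} (hρ : ContDiff ℝ ∞ ρ) (hc : HasCompactSupport ρ) :
    ProperKer (kerQ J ρ) := by
  refine ⟨contDiff_kerQ J hρ, fun R => ?_⟩
  obtain ⟨C, hC, h⟩ := sgQ_compact J hc R
  exact ⟨C, hC, fun p hp q hq => image_eq_zero_of_notMem_tsupport (f := ρ) (h p hp q hq)⟩

lemma properKer_kerX (j : Fin (2*n)) {ρ : GrpPt n m → ℝ} (hρ : ContDiff ℝ ∞ ρ)
    (hc : HasCompactSupport ρ) : ProperKer (kerX J j ρ) := by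
  refine ⟨contDiff_kerX J j hρ, fun R => ?_⟩
  obtain ⟨C, hC, h⟩ := sgQ_compact J (hc.fderiv (𝕜 := ℝ)) R
  refine ⟨C, hC, fun p hp q hq => ?_⟩
  rw [kerX, image_eq_zero_of_notMem_tsupport (h p hp q hq)]
  rfl

lemma ProperKer.hasCompactSupport {K : GrpPt n m → GrpPt n m → ℝ} (hK : ProperKer K)
    (p : GrpPt n m) : HasCompactSupport (K p) := by
  obtain ⟨C, hC, h⟩ := hK.2 (‖p‖ + 1)
  exact HasCompactSupport.intro hC fun q hq => h p (by simp) q hq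

/-- The integral operator with kernel `K`. -/
def kop (K : GrpPt n m → GrpPt n m → ℝ) (g : GrpPt n m → ℝ) (p : GrpPt n m) : ℝ :=
  ∫ q, g q * K p q

lemma kop_eq_conv (K : GrpPt n m → GrpPt n m → ℝ) (g : GrpPt n m → ℝ) (p : GrpPt n m) :
    kop K g p = (g ⋆[ContinuousLinearMap.mul ℝ ℝ, volume] (fun x => K p (-x))) 0 := by
  simp [kop, convolution]

lemma ProperKer.integrable {K : GrpPt n m → GrpPt n m → ℝ} (hK : ProperKer K)
    {g : GrpPt n m → ℝ} (hg : LocallyIntegrable g) (p : GrpPt n m) :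
    Integrable fun q => g q * K p q := by
  have := hg.integrable_smul_left_of_hasCompactSupport
    (kerQ_comp_right hK.1 p).continuous (hK.hasCompactSupport p)
  simpa [mul_comm] using this

lemma contDiff_kop {K : GrpPt n m → GrpPt n m → ℝ} (hK : ProperKer K) {g : GrpPt n m → ℝ}
    (hg : LocallyIntegrable g) : ContDiff ℝ ∞ (kop K g) := by
  rw [contDiff_iff_contDiffAt]
  intro p
  obtain ⟨C, hC, h⟩ := hK.2 (‖p‖ + 1)
  have := contDiffOn_convolution_right_with_param_comp (n := ⊤) (μ := volume)
    (ContinuousLinearMap.mul ℝ ℝ)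
    (s := Metric.ball (0 : GrpPt n m) (‖p‖+1)) (v := fun _ => (0 : GrpPt n m)) contDiffOn_const
    (f := g) (g := fun p x => K p (-x)) (k := -C) Metric.isOpen_ball hC.neg
    (fun p x hp hx => h p hp (-x) (by simpa using hx)) hg
    (ContDiff.contDiffOn (hK.1.comp (contDiff_fst.prodMk contDiff_snd.neg)))
  have h2 := this.contDiffAt (x := p) (Metric.isOpen_ball.mem_nhds (by simp))
  convert h2 using 1
  ext p
  rw [kop_eq_conv]

/-- Differentiation under the integral sign. -/
lemma XD_kop {K : GrpPt n m → GrpPt n m → ℝ} (hK : ProperKer K) {g : GrpPt n m → ℝ}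
    (hg : LocallyIntegrable g) (j : Fin (2*n)) (p : GrpPt n m) :
    XD J j (kop K g) p = kop (fun p q => XD J j (fun p' => K p' q) p) g p := by
  obtain ⟨C, hC, h⟩ := hK.2 (‖p‖ + 1)
  have hsm : ContDiff ℝ ∞ (fun z : GrpPt n m × GrpPt n m => K z.1 (-z.2)) :=
    hK.1.comp (contDiff_fst.prodMk contDiff_snd.neg)
  have hd := hasFDerivAt_convolution_right_with_param (μ := volume)
    (ContinuousLinearMap.mul ℝ ℝ)
    (s := Metric.ball (0 : GrpPt n m) (‖p‖+1))
    (f := g) (g := fun p x => K p (-x)) (k := -C) Metric.isOpen_ball hC.neg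
    (fun p x hp hx => h p hp (-x) (by simpa using hx)) hg
    (ContDiff.contDiffOn (hsm.of_le (by simp))) (p, 0) (by simp)
  have hd2 := (HasFDerivAt.comp (f := fun x => (id x, (0 : GrpPt n m))) p hd ((hasFDerivAt_id p).prodMk (hasFDerivAt_const (0 : GrpPt n m) p))).fderiv
  have he : (fun q : GrpPt n m × GrpPt n m => (g ⋆[ContinuousLinearMap.mul ℝ ℝ, volume]
      (fun x => K q.1 (-x))) q.2) ∘ (fun x => (id x, (0 : GrpPt n m))) = kop K g := by
    ext p; simp [kop_eq_conv]
  rw [he] at hd2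
  rw [XD_eq, hd2, ContinuousLinearMap.comp_apply, convolution, ContinuousLinearMap.integral_apply]
  · rw [kop]
    refine integral_congr_ae (ae_of_all _ fun q => ?_)
    simp only [zero_sub]
    rw [XD_eq]
    have hc : fderiv ℝ (fun p' => K p' q) p =
        (fderiv ℝ (fun z : GrpPt n m × GrpPt n m => K z.1 (-z.2)) (p, -q)).comp
          (ContinuousLinearMap.inl ℝ _ _) := by
      have := HasFDerivAt.comp (f := fun x => (id x, -q)) p
        (hsm.differentiable (by simp) (p, -q)).hasFDerivAt
        ((hasFDerivAt_id p).prodMk (hasFDerivAt_const (-q) p))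
      have h3 := this.fderiv
      simp only [Function.comp_def, neg_neg, id] at h3
      rw [h3]
      rfl
    rw [hc]
    simp only [ContinuousLinearMap.precompR_apply, ContinuousLinearMap.comp_apply,
      ContinuousLinearMap.inl_apply]
    rfl
  · have hcont : Continuous (fun t => fderiv ℝ (fun z : GrpPt n m × GrpPt n m => K z.1 (-z.2)) (p, -t)) :=
      (hsm.continuous_fderiv (by simp)).comp (by fun_prop)
    have hcs : HasCompactSupport
        (fun t => fderiv ℝ (fun z : GrpPt n m × GrpPt n m => K z.1 (-z.2)) (p, -t)) := by
      refine HasCompactSupport.intro hC fun q hq => ?_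
      refine (hasFDerivAt_zero_of_eventually_const (0:ℝ) ?_).fderiv
      have h1 : ∀ᶠ z : GrpPt n m × GrpPt n m in 𝓝 (p, -q),
          z.1 ∈ Metric.ball (0 : GrpPt n m) (‖p‖+1) :=
        continuous_fst.continuousAt.eventually_mem (Metric.isOpen_ball.mem_nhds (by simp))
      have h2 : ∀ᶠ z : GrpPt n m × GrpPt n m in 𝓝 (p, -q), -z.2 ∈ Cᶜ :=
        continuous_snd.neg.continuousAt.eventually_mem
          (hC.isClosed.isOpen_compl.mem_nhds (by simpa using hq))
      filter_upwards [h1, h2] with z hz1 hz2 using h _ hz1 _ hz2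
    have := hg.integrable_smul_right_of_hasCompactSupport hcont hcs
    refine this.congr (ae_of_all _ fun t => ?_)
    refine ContinuousLinearMap.ext fun v => ?_
    simp only [zero_sub, ContinuousLinearMap.precompR_apply]
    rfl

end Kernel

/-! ### `L²` tools and group mollification -/

section L2
open scoped ContDiff Topology Convolution

/-- The squared `L²` norm with respect to Lebesgue measure, as an extended nonnegative real. -/
def l2 {n m : ℕ} (f : GrpPt n m → ℝ) : ℝ≥0∞ := ∫⁻ p, ENNReal.ofReal (f p ^ 2)

variable {n m : ℕ}

lemma l2_add {f g : GrpPt n m → ℝ} (hf : AEMeasurable f) :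
    l2 (fun p => f p + g p) ≤ 2 * l2 f + 2 * l2 g := by
  unfold l2
  rw [← lintegral_const_mul' _ _ (by simp), ← lintegral_const_mul' _ _ (by simp),
    ← lintegral_add_left' (by fun_prop)]
  refine lintegral_mono fun p => ?_
  rw [show (2 : ℝ≥0∞) = ENNReal.ofReal 2 by simp, ← ENNReal.ofReal_mul (by norm_num),
    ← ENNReal.ofReal_mul (by norm_num), ← ENNReal.ofReal_add (by positivity) (by positivity)]
  apply ENNReal.ofReal_le_ofReal
  nlinarith [sq_nonneg (f p - g p)]

lemma l2_mono {f g : GrpPt n m → ℝ} (h : ∀ p, |f p| ≤ |g p|) : l2 f ≤ l2 g :=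
  lintegral_mono fun p => ENNReal.ofReal_le_ofReal (sq_le_sq.mpr (h p))

lemma l2_congr {f g : GrpPt n m → ℝ} (h : f =ᵐ[volume] g) : l2 f = l2 g :=
  lintegral_congr_ae (by filter_upwards [h] with p hp; rw [hp])

lemma l2_bdd_mul {f c : GrpPt n m → ℝ} {M : ℝ} (h : ∀ p, |c p| ≤ M) :
    l2 (fun p => c p * f p) ≤ ENNReal.ofReal (M ^ 2) * l2 f := by
  unfold l2
  rw [← lintegral_const_mul' _ _ (by simp)]
  refine lintegral_mono fun p => ?_
  rw [← ENNReal.ofReal_mul (by positivity)]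
  apply ENNReal.ofReal_le_ofReal
  rw [mul_pow]
  have : c p ^ 2 ≤ M ^ 2 := by
    rw [← sq_abs]; gcongr; exact h p
  gcongr

lemma l2_sub_comm (f g : GrpPt n m → ℝ) : l2 (fun p => f p - g p) = l2 (fun p => g p - f p) := by
  unfold l2
  refine lintegral_congr fun p => ?_
  rw [sub_sq_comm]

lemma l2_dct {D : ℕ → GrpPt n m → ℝ} {G : GrpPt n m → ℝ} (hD : ∀ k, AEMeasurable (D k))
    (hG : l2 G ≠ ⊤) (hb : ∀ k, ∀ p, |D k p| ≤ |G p|)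
    (hl : ∀ᵐ p : GrpPt n m, Tendsto (fun k => D k p) atTop (𝓝 0)) :
    Tendsto (fun k => l2 (D k)) atTop (𝓝 0) := by
  have := tendsto_lintegral_of_dominated_convergence' (μ := (volume : Measure (GrpPt n m)))
    (F := fun k p => ENNReal.ofReal (D k p ^ 2)) (f := fun _ => 0)
    (fun p => ENNReal.ofReal (G p ^ 2)) (fun k => by have := hD k; fun_prop)
    (fun k => ae_of_all _ fun p => ENNReal.ofReal_le_ofReal (sq_le_sq.mpr (hb k p))) hG
    (by
      filter_upwards [hl] with p hp
      have := (ENNReal.continuous_ofReal.tendsto _).comp (hp.pow 2)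
      simpa [Function.comp_def] using this)
  simpa [l2] using this

/-- Multipliers that are uniformly bounded and converge almost everywhere preserve `L²` limits. -/
lemma tendsto_l2_mul {f c : ℕ → GrpPt n m → ℝ} {f0 c0 : GrpPt n m → ℝ} {M : ℝ}
    (hf0 : AEMeasurable f0)
    (hc : ∀ k, AEMeasurable (c k)) (hc0 : AEMeasurable c0)
    (hf0' : l2 f0 ≠ ⊤) (hl : Tendsto (fun k => l2 (fun p => f k p - f0 p)) atTop (𝓝 0))
    (hb : ∀ k p, |c k p| ≤ M) (hb0 : ∀ p, |c0 p| ≤ M)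
    (hcl : ∀ᵐ p : GrpPt n m, Tendsto (fun k => c k p) atTop (𝓝 (c0 p))) :
    Tendsto (fun k => l2 (fun p => c k p * f k p - c0 p * f0 p)) atTop (𝓝 0) := by
  have h1 : Tendsto (fun k => l2 (fun p => (c k p - c0 p) * f0 p)) atTop (𝓝 0) := by
    refine l2_dct (G := fun p => (2 * M) * f0 p) (fun k => by have := hc k; fun_prop) ?_ ?_ ?_
    · exact (lt_of_le_of_lt (l2_bdd_mul (M := |2 * M|) (fun _ => le_rfl))
        (ENNReal.mul_lt_top ENNReal.ofReal_lt_top hf0'.lt_top)).ne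
    · intro k p
      rw [abs_mul, abs_mul]
      have h1 := abs_sub (c k p) (c0 p)
      have h2 := hb k p
      have h3 := hb0 p
      have : |c k p - c0 p| ≤ |2 * M| := le_trans (by linarith) (le_abs_self _)
      gcongr
    · filter_upwards [hcl] with p hp
      simpa using (hp.sub_const (c0 p)).mul_const (f0 p)
  have h2 : Tendsto (fun k => ENNReal.ofReal (M^2) * l2 (fun p => f k p - f0 p)) atTop (𝓝 0) := by
    simpa using ENNReal.Tendsto.const_mul hl (Or.inr (by simp))
  have h3 : Tendsto (fun k => 2 * l2 (fun p => (c k p - c0 p) * f0 p)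
      + 2 * (ENNReal.ofReal (M^2) * l2 (fun p => f k p - f0 p))) atTop (𝓝 0) := by
    simpa using (ENNReal.Tendsto.const_mul h1 (Or.inr (by simp : (2:ℝ≥0∞) ≠ ⊤))).add
      (ENNReal.Tendsto.const_mul h2 (Or.inr (by simp : (2:ℝ≥0∞) ≠ ⊤)))
  refine tendsto_of_tendsto_of_tendsto_of_le_of_le tendsto_const_nhds h3 (fun _ => by simp) ?_
  intro k
  have : (fun p => c k p * f k p - c0 p * f0 p)
      = fun p => (c k p - c0 p) * f0 p + c k p * (f k p - f0 p) := by ext p; ring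
  simp only [this]
  refine (l2_add (by have := hc k; fun_prop)).trans ?_
  gcongr
  exact l2_bdd_mul (hb k)

lemma l2_ne_top_iff {f : GrpPt n m → ℝ} (hf : AEMeasurable f) :
    l2 f ≠ ⊤ ↔ Integrable fun p => f p ^ 2 := by
  rw [← lt_top_iff_ne_top, Integrable, hasFiniteIntegral_iff_ofReal (ae_of_all _ fun p => sq_nonneg _)]
  exact ⟨fun h => ⟨(hf.pow_const 2).aestronglyMeasurable, h⟩, fun h => h.2⟩

lemma memLp_of_l2 {f : GrpPt n m → ℝ} (hf : AEMeasurable f) (h : l2 f ≠ ⊤) :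
    MemLp f 2 (volume : Measure (GrpPt n m)) :=
  (memLp_two_iff_integrable_sq hf.aestronglyMeasurable).mpr ((l2_ne_top_iff hf).1 h)

lemma locInt_of_l2 {f : GrpPt n m → ℝ} (hf : AEMeasurable f) (h : l2 f ≠ ⊤) :
    LocallyIntegrable f (volume : Measure (GrpPt n m)) :=
  (memLp_of_l2 hf h).locallyIntegrable (by norm_num)

end L2

section Moll
open scoped ContDiff Topology Convolution

variable {n m : ℕ} {J : Fin m → Matrix (Fin (2*n)) (Fin (2*n)) ℝ}

/-- Unimodularity of the group: `q ↦ p · q⁻¹` preserves Lebesgue measure, being a shear composed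
with translations and reflections. -/
lemma mp_right (p : GrpPt n m) :
    MeasurePreserving (fun q => sgQ J p q) (volume : Measure (GrpPt n m)) volume := by
  have := MeasurePreserving.skew_product (μa := (volume : Measure (Fin (2*n) → ℝ)))
    (μb := volume) (μc := (volume : Measure (Fin m → ℝ))) (μd := volume)
    (f := fun x => p.1 - x) (Measure.measurePreserving_sub_left volume p.1)
    (g := fun x t => (fun k => p.2 k - (1/2 : ℝ) * ((J k).mulVec p.1 ⬝ᵥ x)) - t)
    (by
      apply Continuous.measurable
      simp only [Function.uncurry_def, dotProduct]
      fun_prop)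
    (ae_of_all _ fun x => (Measure.measurePreserving_sub_left volume _).map_eq)
  have h2 : (fun q => sgQ J p q) = fun q : GrpPt n m =>
      (p.1 - q.1, (fun k => p.2 k - (1/2 : ℝ) * ((J k).mulVec p.1 ⬝ᵥ q.1)) - q.2) := by
    funext q
    refine Prod.ext rfl ?_
    funext i
    simp [sgQ]; ring
  rw [h2]
  exact this

lemma mp_left (q : GrpPt n m) :
    MeasurePreserving (fun p => sgQ J p q) (volume : Measure (GrpPt n m)) volume := by
  have := MeasurePreserving.skew_product (μa := (volume : Measure (Fin (2*n) → ℝ)))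
    (μb := volume) (μc := (volume : Measure (Fin m → ℝ))) (μd := volume)
    (f := fun x => x - q.1) (measurePreserving_sub_right volume q.1)
    (g := fun x t => t - (fun k => q.2 k + (1/2 : ℝ) * ((J k).mulVec x ⬝ᵥ q.1)))
    (by
      apply Continuous.measurable
      simp only [Function.uncurry_def, dotProduct, Matrix.mulVec]
      fun_prop)
    (ae_of_all _ fun x => (measurePreserving_sub_right volume _).map_eq)
  have h2 : (fun p => sgQ J p q) = fun p : GrpPt n m =>
      (p.1 - q.1, p.2 - (fun k => q.2 k + (1/2 : ℝ) * ((J k).mulVec p.1 ⬝ᵥ q.1))) := by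
    funext q
    refine Prod.ext rfl ?_
    funext i
    simp [sgQ]; ring
  rw [h2]
  exact this

/-- Smooth probability densities with compact support. -/
structure IsMoll (ρ : GrpPt n m → ℝ) : Prop where
  smooth : ContDiff ℝ ∞ ρ
  cpt : HasCompactSupport ρ
  nonneg : ∀ p, 0 ≤ ρ p
  int_one : ∫ p, ρ p = 1

lemma IsMoll.lint {ρ : GrpPt n m → ℝ} (h : IsMoll ρ) : ∫⁻ p, ENNReal.ofReal (ρ p) = 1 := by
  rw [← ofReal_integral_eq_lintegral_ofReal
    (h.smooth.continuous.integrable_of_hasCompactSupport h.cpt) (ae_of_all _ h.nonneg), h.int_one]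
  simp

lemma IsMoll.kerQ_int {ρ : GrpPt n m → ℝ} (h : IsMoll ρ) (p : GrpPt n m) :
    ∫ q, kerQ J ρ p q = 1 := by
  rw [← h.int_one, ← (mp_right (J := J) p).map_eq, integral_map (mp_right p).measurable.aemeasurable
    h.smooth.continuous.aestronglyMeasurable]
  simp [kerQ, (mp_right (J := J) p).map_eq]

lemma IsMoll.kerQ_lint {ρ : GrpPt n m → ℝ} (h : IsMoll ρ) (q : GrpPt n m) :
    ∫⁻ p, ENNReal.ofReal (kerQ J ρ p q) = 1 := by
  rw [← h.lint]
  exact (mp_left (J := J) q).lintegral_comp (f := fun s => ENNReal.ofReal (ρ s))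
    (ENNReal.measurable_ofReal.comp h.smooth.continuous.measurable)

/-- The Cauchy–Schwarz inequality for the probability density `q ↦ ρ(p · q⁻¹)`. -/
lemma sq_kop_le {ρ : GrpPt n m → ℝ} (h : IsMoll ρ) {g : GrpPt n m → ℝ} (hg : AEMeasurable g)
    (hg2 : l2 g ≠ ⊤) (p : GrpPt n m) :
    (kop (kerQ J ρ) g p)^2 ≤ ∫ q, g q ^ 2 * kerQ J ρ p q := by
  have hK := properKer_kerQ (J := J) h.smooth h.cpt
  have i1 := hK.integrable (locInt_of_l2 hg hg2) p
  have i2 : Integrable fun q => g q ^ 2 * kerQ J ρ p q :=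
    hK.integrable ((l2_ne_top_iff hg).1 hg2).locallyIntegrable p
  have i3 : Integrable (kerQ J ρ p) :=
    (kerQ_comp_right hK.1 p).continuous.integrable_of_hasCompactSupport (hK.hasCompactSupport p)
  set c := kop (kerQ J ρ) g p with hc
  have h0 : 0 ≤ ∫ q, (g q - c)^2 * kerQ J ρ p q :=
    integral_nonneg fun q => mul_nonneg (sq_nonneg _) (h.nonneg _)
  have h1 : ∫ q, (g q - c)^2 * kerQ J ρ p q
      = ∫ q, (g q ^ 2 * kerQ J ρ p q - 2 * c * (g q * kerQ J ρ p q)) + c ^ 2 * kerQ J ρ p q := by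
    congr 1; ext q; ring
  have i4 : Integrable fun q => g q ^ 2 * kerQ J ρ p q - 2 * c * (g q * kerQ J ρ p q) :=
    i2.sub (i1.const_mul _)
  rw [h1, integral_add i4 (i3.const_mul _),
    integral_sub i2 (i1.const_mul _), integral_const_mul, integral_const_mul, h.kerQ_int,
    show ∫ q, g q * kerQ J ρ p q = c from rfl] at h0
  nlinarith

/-- Young's inequality: mollification is a contraction of `L²`. -/
lemma l2_kop_le {ρ : GrpPt n m → ℝ} (h : IsMoll ρ) {g : GrpPt n m → ℝ} (hg : AEMeasurable g)
    (hg2 : l2 g ≠ ⊤) : l2 (kop (kerQ J ρ) g) ≤ l2 g := by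
  have hK := properKer_kerQ (J := J) h.smooth h.cpt
  calc l2 (kop (kerQ J ρ) g)
      ≤ ∫⁻ p, ∫⁻ q, ENNReal.ofReal (g q ^ 2) * ENNReal.ofReal (kerQ J ρ p q) := by
        refine lintegral_mono fun p => ?_
        refine (ENNReal.ofReal_le_ofReal (sq_kop_le h hg hg2 p)).trans ?_
        rw [ofReal_integral_eq_lintegral_ofReal
          (hK.integrable ((l2_ne_top_iff hg).1 hg2).locallyIntegrable p)
          (ae_of_all _ fun q => mul_nonneg (sq_nonneg _) (h.nonneg _))]
        refine lintegral_mono fun q => ?_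
        rw [← ENNReal.ofReal_mul (sq_nonneg _)]
    _ = ∫⁻ q, ∫⁻ p, ENNReal.ofReal (g q ^ 2) * ENNReal.ofReal (kerQ J ρ p q) := by
        refine lintegral_lintegral_swap ?_
        have hg' : AEMeasurable (fun z : GrpPt n m × GrpPt n m => g z.2) (volume.prod volume) :=
          hg.comp_snd
        have : Measurable (fun z : GrpPt n m × GrpPt n m => kerQ J ρ z.1 z.2) :=
          hK.1.continuous.measurable
        simp only [Function.uncurry_def]
        fun_prop
    _ = l2 g := by
        refine lintegral_congr fun q => ?_
        rw [lintegral_const_mul' _ _ (by simp), h.kerQ_lint, mul_one]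

lemma kop_sub {K : GrpPt n m → GrpPt n m → ℝ} (hK : ProperKer K) {f g : GrpPt n m → ℝ}
    (hf : LocallyIntegrable f) (hg : LocallyIntegrable g) (p : GrpPt n m) :
    kop K (fun q => f q - g q) p = kop K f p - kop K g p := by
  unfold kop
  rw [← integral_sub (hK.integrable hf p) (hK.integrable hg p)]
  simp only [sub_mul]

variable (n m) in
/-- The bump function of radius `1 / (k + 1)` at the origin. -/
def bumpK (k : ℕ) : ContDiffBump (0 : GrpPt n m) where
  rIn := 1 / (2 * ((k:ℝ) + 1))
  rOut := 1 / ((k:ℝ) + 1)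
  rIn_pos := by positivity
  rIn_lt_rOut := by
    apply one_div_lt_one_div_of_lt <;> nlinarith [(Nat.cast_nonneg k : (0:ℝ) ≤ k)]

variable (n m) in
/-- The approximate identity obtained by normalizing `bumpK`. -/
def rhoK (k : ℕ) : GrpPt n m → ℝ := (bumpK n m k).normed volume

lemma rhoK_isMoll (k : ℕ) : IsMoll (rhoK n m k) where
  smooth := (bumpK n m k).contDiff_normed
  cpt := (bumpK n m k).hasCompactSupport_normed
  nonneg := (bumpK n m k).nonneg_normed
  int_one := (bumpK n m k).integral_normed

lemma rhoK_supp (k : ℕ) {p : GrpPt n m} (h : rhoK n m k p ≠ 0) : p ∈ Metric.closedBall 0 1 := by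
  have : p ∈ tsupport (rhoK n m k) := subset_tsupport _ h
  rw [rhoK, (bumpK n m k).tsupport_normed_eq] at this
  refine Metric.closedBall_subset_closedBall ?_ this
  simp only [bumpK]
  rw [div_le_one (by positivity)]
  linarith [(Nat.cast_nonneg k : (0:ℝ) ≤ k)]

lemma kop_eq_taQ {ρ : GrpPt n m → ℝ} (h : IsMoll ρ) {g : GrpPt n m → ℝ} (hg : Continuous g)
    (p : GrpPt n m) : kop (kerQ J ρ) g p = ∫ s, ρ s * g (taQ J p s) := by
  have hct : Continuous fun s => ρ s * g (taQ J p s) :=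
    h.smooth.continuous.mul (hg.comp
      ((contDiff_taQ J).continuous.comp (f := fun s => (p, s)) (by fun_prop)))
  rw [← (mp_right (J := J) p).map_eq, integral_map (mp_right p).measurable.aemeasurable
    hct.aestronglyMeasurable]
  simp only [taQ_sgQ, kop, kerQ]
  congr 1; ext q; ring

lemma tendsto_kop_point (hskew : ∀ k, (J k).transpose = -(J k)) {g : GrpPt n m → ℝ}
    (hg : Continuous g) (p : GrpPt n m) :
    Tendsto (fun k => kop (kerQ J (rhoK n m k)) g p) atTop (𝓝 (g p)) := by
  have hc : Continuous fun s => g (taQ J p (-s)) :=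
    hg.comp ((contDiff_taQ J).continuous.comp (f := fun s => (p, -s)) (by fun_prop))
  have := ContDiffBump.convolution_tendsto_right_of_continuous (φ := bumpK n m) (l := atTop)
    (μ := volume) (by simpa [bumpK] using tendsto_one_div_add_atTop_nhds_zero_nat (𝕜 := ℝ)) hc 0
  simp only [convolution, ContinuousLinearMap.lsmul_apply, zero_sub, neg_neg, neg_zero,
    taQ_zero hskew] at this
  refine this.congr fun k => ?_
  rw [kop_eq_taQ (rhoK_isMoll k) hg]
  rfl

lemma tendsto_kop_cc (hskew : ∀ k, (J k).transpose = -(J k)) {g : GrpPt n m → ℝ}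
    (hg : Continuous g) (hgc : HasCompactSupport g) :
    Tendsto (fun k => l2 (fun p => kop (kerQ J (rhoK n m k)) g p - g p)) atTop (𝓝 0) := by
  obtain ⟨M, hM⟩ := hgc.exists_bound_of_continuous hg
  have hM0 : 0 ≤ M := (norm_nonneg _).trans (hM 0)
  -- the product set `closedBall 0 1 · supp g`
  set C : Set (GrpPt n m) := (fun z : GrpPt n m × GrpPt n m => ((z.1.1 + z.2.1,
    fun k => z.1.2 k + z.2.2 k + (1/2 : ℝ) * ((J k).mulVec (z.1.1 + z.2.1) ⬝ᵥ z.2.1)) : GrpPt n m)) ''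
    (Metric.closedBall 0 1 ×ˢ tsupport g) with hC
  have hCc : IsCompact C := by
    refine ((isCompact_closedBall _ _).prod hgc).image ?_
    simp only [Matrix.mulVec, dotProduct]
    fun_prop
  have hsub : tsupport g ⊆ C := by
    intro q hq
    refine ⟨(0, q), ⟨by simp, hq⟩, ?_⟩
    ext i
    · simp
    · simp [skew_self hskew]
  have hbd : ∀ k p, |kop (kerQ J (rhoK n m k)) g p| ≤ M := by
    intro k p
    have hK := properKer_kerQ (J := J) (rhoK_isMoll (n := n) (m := m) k).smooth (rhoK_isMoll k).cpt
    have i3 : Integrable (kerQ J (rhoK n m k) p) :=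
      (kerQ_comp_right hK.1 p).continuous.integrable_of_hasCompactSupport (hK.hasCompactSupport p)
    calc |kop (kerQ J (rhoK n m k)) g p| ≤ ∫ q, M * kerQ J (rhoK n m k) p q := by
          rw [← Real.norm_eq_abs]
          refine norm_integral_le_of_norm_le (i3.const_mul M) (ae_of_all _ fun q => ?_)
          have hn : 0 ≤ kerQ J (rhoK n m k) p q := (rhoK_isMoll k).nonneg _
          rw [norm_mul, Real.norm_of_nonneg hn]
          exact mul_le_mul_of_nonneg_right (hM q) hn
      _ = M := by rw [integral_const_mul, (rhoK_isMoll k).kerQ_int, mul_one]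
  have hz : ∀ k p, p ∉ C → kop (kerQ J (rhoK n m k)) g p = 0 := by
    intro k p hp
    refine integral_eq_zero_of_ae (ae_of_all _ fun q => ?_)
    by_contra hne
    obtain ⟨h1, h2⟩ := mul_ne_zero_iff.1 hne
    apply hp
    refine ⟨(sgQ J p q, q), ⟨rhoK_supp k h2, subset_tsupport _ h1⟩, ?_⟩
    ext i
    · simp [sgQ]
    · simp [sgQ]; ring
  refine l2_dct (G := C.indicator fun _ => 2 * M) ?_ ?_ ?_ ?_
  · intro k
    have hK := properKer_kerQ (J := J) (rhoK_isMoll (n := n) (m := m) k).smooth (rhoK_isMoll k).cpt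
    exact ((contDiff_kop hK hg.locallyIntegrable).continuous.sub hg).aemeasurable
  · have : l2 (C.indicator fun _ => 2 * M) = ∫⁻ p in C, ENNReal.ofReal ((2 * M)^2) := by
      rw [l2, ← lintegral_indicator hCc.measurableSet]
      refine lintegral_congr fun p => ?_
      by_cases hp : p ∈ C <;> simp [hp]
    rw [this]
    simp only [lintegral_const, MeasurableSet.univ, Measure.restrict_apply, Set.univ_inter]
    exact ENNReal.mul_ne_top ENNReal.ofReal_ne_top hCc.measure_lt_top.ne
  · intro k p
    by_cases hp : p ∈ C
    · simp only [hp, Set.indicator_of_mem]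
      have h1 := abs_sub (kop (kerQ J (rhoK n m k)) g p) (g p)
      have h2 := hbd k p
      have h3 : |g p| ≤ M := hM p
      exact le_trans (by linarith) (le_abs_self _)
    · have : g p = 0 := image_eq_zero_of_notMem_tsupport fun h => hp (hsub h)
      simp [hp, hz k p hp, this]
  · refine ae_of_all _ fun p => ?_
    simpa using (tendsto_kop_point hskew hg p).sub_const (g p)

/-- Mollification on the group converges in `L²`. -/
lemma tendsto_kop_l2 (hskew : ∀ k, (J k).transpose = -(J k)) {g : GrpPt n m → ℝ}
    (hg : AEMeasurable g) (hg2 : l2 g ≠ ⊤) :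
    Tendsto (fun k => l2 (fun p => kop (kerQ J (rhoK n m k)) g p - g p)) atTop (𝓝 0) := by
  rw [ENNReal.tendsto_nhds_zero]
  intro ε hε
  obtain ⟨δ, hδ0, hδ⟩ : ∃ δ : ℝ, 0 < δ ∧ ENNReal.ofReal δ ≤ ε / 10 := by
    rcases eq_or_ne ε ⊤ with h | h
    · exact ⟨1, one_pos, by simp [h, ENNReal.top_div]⟩
    · refine ⟨(ε / 10).toReal, ENNReal.toReal_pos ?_ ?_, ENNReal.ofReal_toReal_le⟩
      · exact (ENNReal.div_pos hε.ne' (by simp)).ne'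
      · exact (ENNReal.div_lt_top h (by simp)).ne
  have hgm := memLp_of_l2 hg hg2
  have hgm2 : MemLp g (ENNReal.ofReal 2) volume := by simpa using hgm
  obtain ⟨h, hcs, hle, hcont, hmem⟩ :=
    hgm2.exists_hasCompactSupport_integral_rpow_sub_le (by norm_num) hδ0
  have hhl : LocallyIntegrable h := hcont.locallyIntegrable
  have hd : AEMeasurable fun q => g q - h q := hg.sub hcont.aemeasurable
  have hmem2 : MemLp (fun q => g q - h q) 2 volume := hgm.sub (by simpa using hmem)
  have h_intg : Integrable fun q => (g q - h q) ^ 2 :=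
    (memLp_two_iff_integrable_sq hd.aestronglyMeasurable).1 hmem2
  have hd2 : l2 (fun q => g q - h q) ≠ ⊤ := (l2_ne_top_iff hd).2 h_intg
  have hd3 : l2 (fun q => g q - h q) ≤ ε / 10 := by
    refine le_trans ?_ hδ
    rw [l2, ← ofReal_integral_eq_lintegral_ofReal h_intg (ae_of_all _ fun _ => sq_nonneg _)]
    apply ENNReal.ofReal_le_ofReal
    simpa using hle
  have hε10 : 0 < ε / 10 := ENNReal.div_pos hε.ne' (by simp)
  filter_upwards [(ENNReal.tendsto_nhds_zero.1 (tendsto_kop_cc hskew hcont hcs)) _ hε10] with k hk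
  have hM := rhoK_isMoll (n := n) (m := m) k
  have hK := properKer_kerQ (J := J) hM.smooth hM.cpt
  have hcg := contDiff_kop hK (locInt_of_l2 hg hg2)
  have hch := contDiff_kop hK hhl
  have e : (fun p => kop (kerQ J (rhoK n m k)) g p - g p) = fun p =>
      kop (kerQ J (rhoK n m k)) (fun q => g q - h q) p +
      ((kop (kerQ J (rhoK n m k)) h p - h p) + (h p - g p)) := by
    ext p
    rw [kop_sub hK (locInt_of_l2 hg hg2) hhl]
    ring
  rw [e]
  calc _ ≤ 2 * l2 (kop (kerQ J (rhoK n m k)) fun q => g q - h q) + 2 * l2 (fun p =>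
        (kop (kerQ J (rhoK n m k)) h p - h p) + (h p - g p)) :=
        l2_add (contDiff_kop hK (locInt_of_l2 hd hd2)).continuous.aemeasurable
    _ ≤ 2 * (ε / 10) + 2 * (2 * (ε / 10) + 2 * (ε / 10)) := by
        gcongr
        · exact (l2_kop_le hM hd hd2).trans hd3
        · refine (l2_add (f := fun p => kop (kerQ J (rhoK n m k)) h p - h p)
            (hch.continuous.sub hcont).aemeasurable).trans ?_
          gcongr
          rw [l2_sub_comm]
          exact hd3
    _ = ε := by
        have e10 : 2 * (ε / 10) + 2 * (2 * (ε / 10) + 2 * (ε / 10)) = 10 * (ε / 10) := by ring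
        rw [e10, ENNReal.mul_div_cancel] <;> norm_num

end Moll

/-! ### The Kaplan norm, the weight and the cutoffs -/

section Weights
open scoped ContDiff Topology

variable {n m : ℕ} {J : Fin m → Matrix (Fin (2*n)) (Fin (2*n)) ℝ}

/-- The fourth power `|x|⁴ + 16|t|²` of the Kaplan norm, a polynomial. -/
def polyP (p : GrpPt n m) : ℝ := (∑ i, p.1 i ^ 2) ^ 2 + 16 * ∑ k, p.2 k ^ 2

lemma contDiff_polyP : ContDiff ℝ ∞ (polyP (n := n) (m := m)) := by
  unfold polyP; fun_prop

lemma polyP_nonneg (p : GrpPt n m) : 0 ≤ polyP p := by unfold polyP; positivity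

lemma fst_le_polyP (p : GrpPt n m) (i : Fin (2*n)) : p.1 i ^ 4 ≤ polyP p := by
  have h1 : p.1 i ^ 2 ≤ ∑ i, p.1 i ^ 2 :=
    Finset.single_le_sum (f := fun i => p.1 i ^ 2) (fun _ _ => sq_nonneg _) (Finset.mem_univ i)
  have h2 : 0 ≤ ∑ k, p.2 k ^ 2 := Finset.sum_nonneg fun _ _ => sq_nonneg _
  unfold polyP
  nlinarith [sq_nonneg (p.1 i)]

lemma snd_le_polyP (p : GrpPt n m) (k : Fin m) : 16 * p.2 k ^ 2 ≤ polyP p := by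
  have h1 : p.2 k ^ 2 ≤ ∑ i, p.2 i ^ 2 :=
    Finset.single_le_sum (f := fun i => p.2 i ^ 2) (fun _ _ => sq_nonneg _) (Finset.mem_univ k)
  unfold polyP
  nlinarith [sq_nonneg (∑ i, p.1 i ^ 2)]

lemma polyP_pos {p : GrpPt n m} (hp : p ≠ 0) : 0 < polyP p := by
  refine (polyP_nonneg p).lt_of_ne fun h => hp ?_
  ext i
  · have := fst_le_polyP p i
    rw [← h] at this
    have h4 : p.1 i ^ 4 = 0 := le_antisymm this (by positivity)
    simpa using h4
  · have := snd_le_polyP p i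
    rw [← h] at this
    have h4 : p.2 i ^ 2 = 0 := by nlinarith [sq_nonneg (p.2 i)]
    simpa using h4

lemma kN_eq (p : GrpPt n m) : kN p = polyP p ^ ((1:ℝ)/4) := by
  have h : ∀ {k : ℕ} (x : Fin k → ℝ), e2norm x ^ 2 = ∑ i, x i ^ 2 := fun x =>
    Real.sq_sqrt (Finset.sum_nonneg fun _ _ => sq_nonneg _)
  rw [kN, polyP, h, show e2norm p.1 ^ 4 = (e2norm p.1 ^ 2) ^ 2 by ring, h]

lemma wA_eq (α : ℝ) (p : GrpPt n m) : wA α p = Real.exp (-(polyP p ^ (α / 4))) := by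
  rw [wA, kN_eq, ← Real.rpow_mul (polyP_nonneg p)]
  congr 3; ring

lemma XD_polyP (j : Fin (2*n)) (p : GrpPt n m) :
    XD J j polyP p = 4 * (∑ i, p.1 i ^ 2) * p.1 j + 16 * ∑ k, (J k).mulVec p.1 j * p.2 k := by
  have hx : ∀ i, HasFDerivAt (fun p : GrpPt n m => p.1 i)
      ((ContinuousLinearMap.proj (R := ℝ) (φ := fun _ : Fin (2*n) => ℝ) i).comp
        (ContinuousLinearMap.fst ℝ (Fin (2*n) → ℝ) (Fin m → ℝ))) p := fun i =>
    ((ContinuousLinearMap.proj (R := ℝ) (φ := fun _ : Fin (2*n) => ℝ) i).comp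
        (ContinuousLinearMap.fst ℝ (Fin (2*n) → ℝ) (Fin m → ℝ))).hasFDerivAt
  have ht : ∀ k, HasFDerivAt (fun p : GrpPt n m => p.2 k)
      ((ContinuousLinearMap.proj (R := ℝ) (φ := fun _ : Fin m => ℝ) k).comp
        (ContinuousLinearMap.snd ℝ (Fin (2*n) → ℝ) (Fin m → ℝ))) p := fun k =>
    ((ContinuousLinearMap.proj (R := ℝ) (φ := fun _ : Fin m => ℝ) k).comp
        (ContinuousLinearMap.snd ℝ (Fin (2*n) → ℝ) (Fin m → ℝ))).hasFDerivAt
  have h1 := (HasFDerivAt.fun_sum (u := Finset.univ) fun i _ => (hx i).pow 2).pow 2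
  have h2 := (HasFDerivAt.fun_sum (u := Finset.univ) fun k _ => (ht k).pow 2).const_mul 16
  have h3 := (h1.add h2).fderiv
  rw [XD_eq]
  change fderiv ℝ (fun p : GrpPt n m => (∑ i, p.1 i ^ 2) ^ 2 + 16 * ∑ k, p.2 k ^ 2) p _ = _
  change fderiv ℝ (fun p : GrpPt n m => (∑ i, p.1 i ^ 2) ^ 2 + 16 * ∑ k, p.2 k ^ 2) p = _ at h3
  rw [h3]
  have h4 : ∑ i, 2 * p.1 i * (Pi.single j 1 : Fin (2*n) → ℝ) i = 2 * p.1 j := by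
    simp [Pi.single_apply]
  simp [xiV]
  rw [h4, show ∀ a b : ℝ, 2 * a * (2 * b) = 4 * a * b by intros; ring]
  congr 2
  exact Finset.sum_congr rfl fun k _ => by ring

variable (J) in
/-- The constant in `|X_j P| ≤ C P^{3/4}`. -/
def cJ : ℝ := 4 + 4 * ∑ j, ∑ k, ∑ i, |J k j i|

lemma cJ_nonneg : 0 ≤ cJ J := by unfold cJ; positivity

/-- `|X_j P| ≤ C P^{3/4}`: `X_j` lowers homogeneity by one and `P` has degree four. -/
lemma XD_polyP_le (j : Fin (2*n)) (p : GrpPt n m) :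
    |XD J j polyP p| ≤ cJ J * polyP p ^ ((3:ℝ)/4) := by
  set N := polyP p ^ ((1:ℝ)/4) with hN
  have hN0 : 0 ≤ N := Real.rpow_nonneg (polyP_nonneg p) _
  have hN4 : N ^ 4 = polyP p := by
    rw [hN, ← Real.rpow_natCast, ← Real.rpow_mul (polyP_nonneg p)]; norm_num
  have hN3 : polyP p ^ ((3:ℝ)/4) = N ^ 3 := by
    rw [hN, ← Real.rpow_natCast, ← Real.rpow_mul (polyP_nonneg p)]; norm_num
  have hx : ∀ i, |p.1 i| ≤ N := fun i => by
    have := fst_le_polyP p i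
    rw [← hN4] at this
    refine abs_le_of_sq_le_sq ?_ hN0
    have h2 : (p.1 i ^ 2) ^ 2 ≤ (N ^ 2) ^ 2 := by nlinarith
    exact le_of_sq_le_sq h2 (by positivity)
  have ht : ∀ k, |p.2 k| ≤ N ^ 2 / 4 := fun k => by
    have := snd_le_polyP p k
    rw [← hN4] at this
    refine abs_le_of_sq_le_sq ?_ (by positivity)
    nlinarith
  have hs : (∑ i, p.1 i ^ 2) ≤ N ^ 2 := by
    refine le_of_sq_le_sq ?_ (by positivity)
    have : 0 ≤ ∑ k, p.2 k ^ 2 := Finset.sum_nonneg fun _ _ => sq_nonneg _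
    have h2 : polyP p = (∑ i, p.1 i ^ 2) ^ 2 + 16 * ∑ k, p.2 k ^ 2 := rfl
    rw [← hN4] at h2
    nlinarith
  have hs0 : 0 ≤ ∑ i, p.1 i ^ 2 := Finset.sum_nonneg fun _ _ => sq_nonneg _
  rw [XD_polyP, hN3]
  have hJ : ∀ k, |(J k).mulVec p.1 j| ≤ (∑ i, |J k j i|) * N := fun k => by
    rw [Matrix.mulVec, dotProduct, Finset.sum_mul]
    refine (Finset.abs_sum_le_sum_abs _ _).trans (Finset.sum_le_sum fun i _ => ?_)
    rw [abs_mul]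
    gcongr
    exact hx i
  have hj : ∑ k, ∑ i, |J k j i| ≤ ∑ j, ∑ k, ∑ i, |J k j i| :=
    Finset.single_le_sum (f := fun j => ∑ k, ∑ i, |J k j i|)
      (fun _ _ => by positivity) (Finset.mem_univ j)
  calc _ ≤ |4 * (∑ i, p.1 i ^ 2) * p.1 j| + |16 * ∑ k, (J k).mulVec p.1 j * p.2 k| := abs_add_le _ _
    _ ≤ 4 * N ^ 2 * N + 16 * ∑ k, ((∑ i, |J k j i|) * N) * (N ^ 2 / 4) := by
        rw [abs_mul, abs_mul, abs_mul, abs_of_nonneg hs0]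
        norm_num
        gcongr
        · exact hx j
        · refine (Finset.abs_sum_le_sum_abs _ _).trans (Finset.sum_le_sum fun k _ => ?_)
          rw [abs_mul]
          gcongr
          · exact hJ k
          · exact ht k
    _ = (4 + 4 * ∑ k, ∑ i, |J k j i|) * N ^ 3 := by
        rw [← Finset.sum_mul, ← Finset.sum_mul]; ring
    _ ≤ cJ J * N ^ 3 := by unfold cJ; gcongr

variable (J) in
/-- The drift coefficient `b_j = -X_j W / W` of the weight `W = exp (-(P + δ)^{α/4})`. For `δ = 0` it
is `α N^{α-1} X_j N` off the origin and `0` at the origin. -/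
def bD (α δ : ℝ) (j : Fin (2*n)) (p : GrpPt n m) : ℝ :=
  α / 4 * (polyP p + δ) ^ (α / 4 - 1) * XD J j polyP p

/-- The exponent `(P + δ)^{α/4}` of the regularized weight. -/
def eD (α δ : ℝ) (p : GrpPt n m) : ℝ := (polyP p + δ) ^ (α / 4)

/-- Growth of the drift. The exponent is nonnegative because `α ≥ 1`, so the drift is locally
bounded, uniformly in small `δ`. -/
lemma bD_le {α δ : ℝ} (hα : 1 ≤ α) (hδ : 0 ≤ δ) (j : Fin (2*n)) (p : GrpPt n m) :
    |bD J α δ j p| ≤ α / 4 * cJ J * (polyP p + δ) ^ ((α - 1) / 4) := by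
  have h := XD_polyP_le (J := J) j p
  have hP := polyP_nonneg p
  rcases (add_nonneg hP hδ).eq_or_lt with h0 | h0
  · have : polyP p = 0 := by linarith
    rw [this, Real.zero_rpow (by norm_num)] at h
    have hX : XD J j polyP p = 0 := by simpa using h
    rw [bD, hX]
    have := cJ_nonneg (J := J)
    simp only [mul_zero, abs_zero]
    positivity
  · rw [bD, abs_mul, abs_of_nonneg (by positivity)]
    calc α / 4 * (polyP p + δ) ^ (α / 4 - 1) * |XD J j polyP p|
        ≤ α / 4 * (polyP p + δ) ^ (α / 4 - 1) * (cJ J * (polyP p + δ) ^ ((3:ℝ)/4)) := by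
          gcongr
          refine h.trans ?_
          have := cJ_nonneg (J := J)
          gcongr
          linarith
      _ = α / 4 * cJ J * ((polyP p + δ) ^ (α / 4 - 1) * (polyP p + δ) ^ ((3:ℝ)/4)) := by ring
      _ = _ := by
          rw [← Real.rpow_add h0]; congr 2; ring

lemma contDiff_eD {α δ : ℝ} (hδ : 0 < δ) : ContDiff ℝ ∞ (eD (n := n) (m := m) α δ) := by
  unfold eD
  exact (contDiff_polyP.add contDiff_const).rpow_const_of_ne fun p =>
    (add_pos_of_nonneg_of_pos (polyP_nonneg p) hδ).ne'

lemma contDiff_bD {α δ : ℝ} (hδ : 0 < δ) (j : Fin (2*n)) : ContDiff ℝ ∞ (bD (m := m) J α δ j) := by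
  unfold bD
  refine (contDiff_const.mul ?_).mul (contDiff_XD J j contDiff_polyP)
  exact (contDiff_polyP.add contDiff_const).rpow_const_of_ne fun p =>
    (add_pos_of_nonneg_of_pos (polyP_nonneg p) hδ).ne'

lemma measurable_bD {α δ : ℝ} (j : Fin (2*n)) : Measurable (bD (m := m) J α δ j) := by
  unfold bD
  have := (contDiff_polyP (n := n) (m := m)).continuous.measurable
  have := (contDiff_XD J j (contDiff_polyP (n := n) (m := m))).continuous.measurable
  fun_prop

lemma continuous_eD {α δ : ℝ} (hα : 1 ≤ α) : Continuous (eD (n := n) (m := m) α δ) := by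
  unfold eD
  exact (contDiff_polyP.continuous.add continuous_const).rpow_const fun p => Or.inr (by positivity)

lemma XD_eD {α δ : ℝ} (j : Fin (2*n)) {p : GrpPt n m} (h : polyP p + δ ≠ 0) :
    XD J j (eD α δ) p = bD J α δ j p := by
  have h1 : HasDerivAt (fun x : ℝ => (x + δ) ^ (α / 4)) (α / 4 * (polyP p + δ) ^ (α / 4 - 1))
      (polyP p) := by
    have := ((hasDerivAt_id (polyP p)).add_const δ).rpow_const (p := α / 4) (Or.inl h)
    simpa [mul_comm, mul_left_comm] using this
  exact XD_comp J j (f := polyP) h1 (contDiff_polyP.differentiable (by simp) p)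

/-- Derivative of `exp (c (P + δ)^{α/4})`. -/
lemma XD_exp_eD {α δ : ℝ} (hδ : 0 < δ) (c : ℝ) (j : Fin (2*n)) (p : GrpPt n m) :
    XD J j (fun q => Real.exp (c * eD α δ q)) p = Real.exp (c * eD α δ p) * (c * bD J α δ j p) := by
  have h1 : HasDerivAt (fun x : ℝ => Real.exp (c * x)) (Real.exp (c * eD α δ p) * c) (eD α δ p) := by
    have := ((hasDerivAt_id (eD α δ p)).const_mul c).exp
    simpa using this
  have := XD_comp J j (f := eD α δ) h1 ((contDiff_eD hδ).differentiable (by simp) p)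
  rw [this, XD_eD j (add_pos_of_nonneg_of_pos (polyP_nonneg p) hδ).ne']
  ring

lemma tendsto_bD {α : ℝ} {δ : ℕ → ℝ} (hδ : Tendsto δ atTop (𝓝 0)) (j : Fin (2*n)) {p : GrpPt n m}
    (hp : p ≠ 0) : Tendsto (fun k => bD J α (δ k) j p) atTop (𝓝 (bD J α 0 j p)) := by
  unfold bD
  refine (Tendsto.const_mul _ ?_).mul_const _
  exact (tendsto_const_nhds.add hδ).rpow_const (Or.inl (by simpa using (polyP_pos hp).ne'))

lemma tendsto_eD {α : ℝ} (hα : 1 ≤ α) {δ : ℕ → ℝ} (hδ : Tendsto δ atTop (𝓝 0)) (p : GrpPt n m) :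
    Tendsto (fun k => eD α (δ k) p) atTop (𝓝 (eD α 0 p)) := by
  unfold eD
  exact (tendsto_const_nhds.add hδ).rpow_const (Or.inr (by positivity))

lemma eD_nonneg {α δ : ℝ} (hδ : 0 ≤ δ) (p : GrpPt n m) : 0 ≤ eD α δ p :=
  Real.rpow_nonneg (add_nonneg (polyP_nonneg p) hδ) _

lemma wA_eD (α : ℝ) (p : GrpPt n m) : wA α p = Real.exp (-(eD α 0 p)) := by
  rw [wA_eq, eD, add_zero]

/-- The drift is globally controlled by the weight: `b_j² w` is bounded. -/
lemma bD_sq_wA_le {α : ℝ} (hα : 1 ≤ α) (j : Fin (2*n)) (p : GrpPt n m) :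
    |bD J α 0 j p * Real.exp (-(eD α 0 p) / 2)| ≤ 2 * (α / 4 * cJ J) := by
  have h := bD_le (J := J) hα le_rfl j p
  have hc : 0 ≤ α / 4 * cJ J := mul_nonneg (by positivity) cJ_nonneg
  have hP := polyP_nonneg p
  have h2 : (polyP p + 0) ^ ((α - 1) / 4) ≤ 1 + eD α 0 p := by
    have he := eD_nonneg (α := α) le_rfl p
    rcases le_total (polyP p + 0) 1 with h1 | h1
    · have := Real.rpow_le_one (by linarith) h1 (z := (α - 1) / 4) (by linarith)
      linarith
    · have := Real.rpow_le_rpow_of_exponent_le h1 (y := (α - 1) / 4) (z := α / 4) (by linarith)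
      unfold eD
      linarith
  have h3 : 1 + eD α 0 p ≤ 2 * Real.exp (eD α 0 p / 2) := by
    have := Real.add_one_le_exp (eD α 0 p / 2)
    linarith
  have h4 : Real.exp (eD α 0 p / 2) * Real.exp (-(eD α 0 p) / 2) = 1 := by
    rw [← Real.exp_add]; ring_nf; simp
  rw [abs_mul, Real.abs_exp]
  calc _ ≤ (α / 4 * cJ J * (2 * Real.exp (eD α 0 p / 2))) * Real.exp (-(eD α 0 p) / 2) := by
        gcongr
        refine h.trans ?_
        gcongr
        exact h2.trans h3
    _ = 2 * (α / 4 * cJ J) * (Real.exp (eD α 0 p / 2) * Real.exp (-(eD α 0 p) / 2)) := by ring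
    _ = _ := by rw [h4, mul_one]

/-- The drift coefficient `α N^{α-1} X_j N` off the origin, where `N` is differentiable. -/
lemma drift_eq {α : ℝ} (j : Fin (2*n)) {p : GrpPt n m} (hp : p ≠ 0) :
    (α * kN p ^ (α - 1)) * XD J j kN p = bD J α 0 j p := by
  have hP := polyP_pos hp
  have h1 : HasDerivAt (fun x : ℝ => x ^ ((1:ℝ)/4)) ((1:ℝ)/4 * polyP p ^ ((1:ℝ)/4 - 1))
      (polyP p) := Real.hasDerivAt_rpow_const (Or.inl hP.ne')
  have h2 := XD_comp J j (f := polyP) h1 (contDiff_polyP.differentiable (by simp) p)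
  have h3 : (kN : GrpPt n m → ℝ) = fun q => polyP q ^ ((1:ℝ)/4) := funext kN_eq
  rw [h3, h2, bD, add_zero]
  simp only
  rw [← Real.rpow_mul hP.le, show α / 4 - 1 = (1/4 * (α - 1)) + (1/4 - 1) by ring, Real.rpow_add hP]
  ring

lemma ae_ne_zero (hn : 1 ≤ n) : ∀ᵐ p : GrpPt n m, p ≠ 0 := by
  have : NullSingletonClass (volume : Measure (Fin (2*n) → ℝ)) :=
    Measure.pi_nullSingletonClass ⟨0, by omega⟩
  have : NullSingletonClass (volume : Measure (GrpPt n m)) := by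
    change NullSingletonClass (Measure.prod _ _)
    infer_instance
  exact compl_mem_ae_iff.2 (measure_singleton _)

/-- A smooth cutoff profile: `1` on `(-∞, 1]` and `0` on `[2, ∞)`. -/
def cutH (t : ℝ) : ℝ := Real.smoothTransition (2 - t)

lemma contDiff_cutH : ContDiff ℝ ∞ cutH :=
  Real.smoothTransition.contDiff.comp (contDiff_const.sub contDiff_id)

lemma cutH_one {t : ℝ} (h : t ≤ 1) : cutH t = 1 :=
  Real.smoothTransition.one_of_one_le (by linarith)

lemma cutH_zero {t : ℝ} (h : 2 ≤ t) : cutH t = 0 :=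
  Real.smoothTransition.zero_of_nonpos (by linarith)

lemma deriv_cutH_zero {t : ℝ} (h : 2 < t) : deriv cutH t = 0 := by
  have : cutH =ᶠ[𝓝 t] fun _ => 0 := by
    filter_upwards [lt_mem_nhds h] with s hs using cutH_zero hs.le
  rw [this.deriv_eq, deriv_const]

lemma deriv_cutH_zero' {t : ℝ} (h : t < 1) : deriv cutH t = 0 := by
  have : cutH =ᶠ[𝓝 t] fun _ => 1 := by
    filter_upwards [gt_mem_nhds h] with s hs using cutH_one hs.le
  rw [this.deriv_eq, deriv_const]

lemma exists_deriv_cutH_le : ∃ M : ℝ, 0 ≤ M ∧ ∀ t, |deriv cutH t| ≤ M := by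
  have hc : Continuous (deriv cutH) := contDiff_cutH.continuous_deriv (by simp)
  obtain ⟨M, hM⟩ := (isCompact_Icc (a := (1:ℝ)) (b := 2)).exists_bound_of_continuousOn
    hc.continuousOn
  refine ⟨M, (norm_nonneg _).trans (hM 1 (by simp)), fun t => ?_⟩
  by_cases h1 : t < 1
  · rw [deriv_cutH_zero' h1, abs_zero]; exact (norm_nonneg _).trans (hM 1 (by simp))
  by_cases h2 : 2 < t
  · rw [deriv_cutH_zero h2, abs_zero]; exact (norm_nonneg _).trans (hM 1 (by simp))
  exact hM t ⟨not_lt.1 h1, not_lt.1 h2⟩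

/-- The smooth cutoff at Kaplan radius `R`: it is `1` for `N⁴ ≤ R⁴` and `0` for `N⁴ ≥ 2 R⁴`. -/
def chiR (R : ℝ) (p : GrpPt n m) : ℝ := cutH (polyP p / R ^ 4)

lemma contDiff_chiR (R : ℝ) : ContDiff ℝ ∞ (chiR (n := n) (m := m) R) :=
  contDiff_cutH.comp (contDiff_polyP.div_const _)

lemma chiR_nonneg (R : ℝ) (p : GrpPt n m) : 0 ≤ chiR R p := Real.smoothTransition.nonneg _

lemma chiR_le_one (R : ℝ) (p : GrpPt n m) : chiR R p ≤ 1 := Real.smoothTransition.le_one _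

lemma chiR_zero {R : ℝ} (hR : 0 < R) {p : GrpPt n m} (h : 2 * R ^ 4 ≤ polyP p) :
    chiR R p = 0 := cutH_zero (by rwa [le_div_iff₀ (by positivity)])

lemma chiR_one {R : ℝ} (hR : 0 < R) {p : GrpPt n m} (h : polyP p ≤ R ^ 4) :
    chiR R p = 1 := cutH_one (by rwa [div_le_one (by positivity)])

lemma XD_chiR (R : ℝ) (j : Fin (2*n)) (p : GrpPt n m) :
    XD J j (chiR R) p = deriv cutH (polyP p / R ^ 4) / R ^ 4 * XD J j polyP p := by
  have h1 : HasDerivAt (fun x : ℝ => cutH (x / R ^ 4)) (deriv cutH (polyP p / R ^ 4) / R ^ 4)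
      (polyP p) := by
    have h2 := (contDiff_cutH.differentiable (by simp) (polyP p / R ^ 4)).hasDerivAt
    have := h2.comp (polyP p) ((hasDerivAt_id (polyP p)).div_const (R ^ 4))
    simpa [Function.comp_def, div_eq_mul_inv] using this
  exact XD_comp J j (f := polyP) h1 (contDiff_polyP.differentiable (by simp) p)

lemma XD_chiR_zero {R : ℝ} (hR : 0 < R) (j : Fin (2*n)) {p : GrpPt n m}
    (h : 2 * R ^ 4 < polyP p) : XD J j (chiR R) p = 0 := by
  rw [XD_chiR, deriv_cutH_zero (by rwa [lt_div_iff₀ (by positivity)])]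
  simp

variable (J) in
/-- The gradient of the cutoff at Kaplan radius `R` is `O(1 / R)`. -/
lemma exists_XD_chiR_le : ∃ C : ℝ, 0 ≤ C ∧ ∀ R : ℝ, 0 < R → ∀ (j : Fin (2*n)) (p : GrpPt n m),
    |XD J j (chiR R) p| ≤ C / R := by
  obtain ⟨M, hM0, hM⟩ := exists_deriv_cutH_le
  have hc := cJ_nonneg (J := J)
  refine ⟨8 * M * cJ J, by positivity, fun R hR j p => ?_⟩
  rcases lt_or_ge (2 * R ^ 4) (polyP p) with h | h
  · rw [XD_chiR_zero hR j h, abs_zero]; positivity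
  · have h1 := XD_polyP_le (J := J) j p
    have h2 : polyP p ^ ((3:ℝ)/4) ≤ 8 * R ^ 3 := by
      calc polyP p ^ ((3:ℝ)/4) ≤ ((2 * R) ^ 4) ^ ((3:ℝ)/4) := by
            refine Real.rpow_le_rpow (polyP_nonneg p) ?_ (by norm_num)
            nlinarith [pow_pos hR 4]
        _ = (2 * R) ^ 3 := by
            rw [← Real.rpow_natCast, ← Real.rpow_mul (by positivity), ← Real.rpow_natCast]
            norm_num
        _ = 8 * R ^ 3 := by ring
    rw [XD_chiR, abs_mul, abs_div, abs_of_pos (by positivity : 0 < R ^ 4)]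
    calc _ ≤ M / R ^ 4 * (cJ J * (8 * R ^ 3)) := by
          gcongr
          · exact hM _
          · exact h1.trans (by gcongr)
      _ = _ := by field_simp

lemma chiR_cpt {R : ℝ} (hR : 0 < R) : HasCompactSupport (chiR (n := n) (m := m) R) := by
  refine HasCompactSupport.intro (isCompact_closedBall (0 : GrpPt n m) (1 + 2 * R ^ 4))
    fun p hp => chiR_zero hR ?_
  by_contra! h
  apply hp
  rw [mem_closedBall_zero_iff, Prod.norm_def, max_le_iff]
  constructor
  · refine (pi_norm_le_iff_of_nonneg (by positivity)).2 fun i => ?_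
    have := fst_le_polyP p i
    rw [Real.norm_eq_abs]
    refine abs_le.2 ⟨?_, ?_⟩ <;> nlinarith [sq_nonneg (p.1 i ^ 2 - 1/2), sq_nonneg (p.1 i - 1/2), sq_nonneg (p.1 i + 1/2)]
  · refine (pi_norm_le_iff_of_nonneg (by positivity)).2 fun k => ?_
    have := snd_le_polyP p k
    rw [Real.norm_eq_abs]
    refine abs_le.2 ⟨?_, ?_⟩ <;> nlinarith [sq_nonneg (p.2 k - 1), sq_nonneg (p.2 k + 1)]

end Weights

/-! ### The mollified equation and its Caccioppoli inequality -/

section Core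
open scoped ContDiff Topology

variable {n m : ℕ} {J : Fin m → Matrix (Fin (2*n)) (Fin (2*n)) ℝ}

lemma XD_neg {E : Type*} [NormedAddCommGroup E] [NormedSpace ℝ E] (j : Fin (2*n))
    (f : GrpPt n m → E) (p : GrpPt n m) :
    XD J j (fun q => - f q) p = - XD J j f p := by
  simp only [XD_eq, fderiv_fun_neg, neg_apply]

lemma XD_add {E : Type*} [NormedAddCommGroup E] [NormedSpace ℝ E] (j : Fin (2*n))
    {f g : GrpPt n m → E} {p : GrpPt n m}
    (hf : DifferentiableAt ℝ f p) (hg : DifferentiableAt ℝ g p) :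
    XD J j (fun q => f q + g q) p = XD J j f p + XD J j g p := by
  simp only [XD_eq, fderiv_fun_add hf hg, add_apply]

lemma integrable_mul_cc {v φ : GrpPt n m → ℝ} (hv : LocallyIntegrable v)
    (hφ : Continuous φ) (hc : HasCompactSupport φ) : Integrable fun q => v q * φ q := by
  have := hv.integrable_smul_left_of_hasCompactSupport hφ hc
  simpa [mul_comm] using this

/-- The weak equation, tested against translates of a mollifier, becomes a classical equation in
divergence form for the mollified functions. -/
lemma moll_eq (hskew : ∀ k, (J k).transpose = -(J k)) {ρ : GrpPt n m → ℝ} (hρ : IsMoll ρ)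
    {v : GrpPt n m → ℝ} {b : Fin (2*n) → GrpPt n m → ℝ} (hv : LocallyIntegrable v)
    (hb : ∀ j, LocallyIntegrable fun q => b j q * v q)
    (hweak : ∀ φ : GrpPt n m → ℝ, ContDiff ℝ ∞ φ → HasCompactSupport φ →
      ∫ p, v p * (LSub J φ p + ∑ j, b j p * XD J j φ p + φ p) = 0) (p : GrpPt n m) :
    ∑ j, XD J j (fun p' => XD J j (kop (kerQ J ρ) v) p' + kop (kerQ J ρ) (fun q => b j q * v q) p') p
      = kop (kerQ J ρ) v p := by
  have hK := properKer_kerQ (J := J) hρ.smooth hρ.cpt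
  have hKX := fun j => properKer_kerX (J := J) j hρ.smooth hρ.cpt
  have hleft : ∀ j g, LocallyIntegrable g → XD J j (kop (kerQ J ρ) g) = kop (kerX J j ρ) g := by
    intro j g hg
    funext p
    rw [XD_kop hK hg]
    simp only [XD_kerQ_left hskew j hρ.smooth]
  have hs := contDiff_kop hK hv
  have hsB := fun j => contDiff_kop hK (hb j)
  set D : Fin (2*n) → GrpPt n m → ℝ := fun j q => XD J j (fun p' => kerX J j ρ p' q) p with hD
  have hDeq : ∀ j, D j = fun q => - XD J j (kerX J j ρ p) q := by
    intro j; funext q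
    have := XD_kerX hskew j hρ.smooth p q
    rw [hD, this, neg_neg]
  have hDint : ∀ j, Integrable fun q => v q * D j q := by
    intro j
    refine integrable_mul_cc hv ?_ ?_
    · rw [hDeq]
      exact (contDiff_XD J j (kerQ_comp_right (hKX j).1 p)).continuous.neg
    · rw [hDeq]
      exact (XD_hasCompactSupport J j ((hKX j).hasCompactSupport p)).neg
  have hterm : ∀ j, XD J j (fun p' => XD J j (kop (kerQ J ρ) v) p'
      + kop (kerQ J ρ) (fun q => b j q * v q) p') p
      = ∫ q, (v q * D j q + b j q * v q * kerX J j ρ p q) := by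
    intro j
    rw [XD_add j ((contDiff_XD J j hs).differentiable (by simp) p)
      ((hsB j).differentiable (by simp) p), hleft j _ hv, XD_kop (hKX j) hv, hleft j _ (hb j)]
    rw [integral_add (hDint j) ((hKX j).integrable (hb j) p)]
    rfl
  have hw := hweak (kerQ J ρ p) (kerQ_comp_right hK.1 p) (hK.hasCompactSupport p)
  have h1 : ∀ j, XD J j (kerQ J ρ p) = fun q => - kerX J j ρ p q := fun j =>
    funext fun q => XD_kerQ_right j hρ.smooth p q
  have h2 : ∀ j q, XD J j (XD J j (kerQ J ρ p)) q = D j q := by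
    intro j q
    rw [h1, XD_neg, hDeq]
  have h3 : (fun q => v q * (LSub J (kerQ J ρ p) q + ∑ j, b j q * XD J j (kerQ J ρ p) q
      + kerQ J ρ p q)) = fun q => v q * kerQ J ρ p q
        - ∑ j, (v q * D j q + b j q * v q * kerX J j ρ p q) := by
    funext q
    simp only [LSub, h2]
    simp only [h1, Finset.sum_add_distrib, ← Finset.mul_sum, mul_neg, Finset.sum_neg_distrib,
      mul_comm (b _ _) (v _), mul_assoc]
    ring
  have h4 : ∀ j, Integrable fun q => v q * D j q + b j q * v q * kerX J j ρ p q :=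
    fun j => (hDint j).add ((hKX j).integrable (hb j) p)
  rw [h3, integral_sub (hK.integrable hv p) (integrable_finsetSum _ fun j _ => h4 j),
    integral_finsetSum _ fun j _ => h4 j] at hw
  rw [Finset.sum_congr rfl fun j _ => hterm j]
  simp only [kop]
  linarith

lemma l2_cc {f : GrpPt n m → ℝ} (hf : Continuous f) (hc : HasCompactSupport f) :
    Integrable (fun p => f p ^ 2) ∧ l2 f = ENNReal.ofReal (∫ p, f p ^ 2) := by
  have h : Integrable (fun p => f p ^ 2) := by
    have h0 : Continuous fun p => f p ^ 2 := by fun_prop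
    have h1 : HasCompactSupport fun p => f p ^ 2 := by
      simp only [sq]
      exact hc.mul_right
    exact h0.integrable_of_hasCompactSupport h1
  exact ⟨h, (ofReal_integral_eq_lintegral_ofReal h (ae_of_all _ fun _ => sq_nonneg _)).symm⟩

/-- Caccioppoli inequality for `∑ X_j (X_j s + B_j) = s`, against the cutoff `χ` and the inverse of
the regularized weight. -/
lemma energy {α δ : ℝ} (hδ : 0 < δ) {s χ : GrpPt n m → ℝ} {B : Fin (2*n) → GrpPt n m → ℝ}
    (hs : ContDiff ℝ ∞ s) (hB : ∀ j, ContDiff ℝ ∞ (B j)) (hχ : ContDiff ℝ ∞ χ)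
    (hχc : HasCompactSupport χ)
    (heq : ∀ p, ∑ j, XD J j (fun p' => XD J j s p' + B j p') p = s p) :
    l2 (fun p => χ p * Real.exp (eD α δ p / 2) * s p) ≤
      ∑ j, (2 * l2 (fun p => XD J j χ p * Real.exp (eD α δ p / 2) * s p)
        + 2 * l2 (fun p => χ p * Real.exp (eD α δ p / 2) * (B j p - bD J α δ j p * s p))) := by
  have he := contDiff_eD (n := n) (m := m) (α := α) hδ
  set E : GrpPt n m → ℝ := fun p => Real.exp (eD α δ p / 2) with hE
  have hEs : ContDiff ℝ ∞ E := (he.div_const 2).exp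
  have hEE : ∀ p, Real.exp (1 * eD α δ p) = E p * E p := fun p => by
    rw [hE, ← Real.exp_add]; ring_nf
  set b := fun j => bD (m := m) J α δ j
  have hb : ∀ j, ContDiff ℝ ∞ (b j) := fun j => contDiff_bD hδ j
  have hEEs : ContDiff ℝ ∞ fun p => E p * E p := hEs.mul hEs
  have hXEE : ∀ j p, XD J j (fun q => E q * E q) p = E p * E p * b j p := by
    intro j p
    have := XD_exp_eD (J := J) (α := α) hδ 1 j p
    simp only [hEE] at this
    rw [this, one_mul]
  have hU : ContDiff ℝ ∞ fun p => s p * (E p * E p) := hs.mul hEEs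
  have hχ2 : ContDiff ℝ ∞ fun p => χ p * χ p := hχ.mul hχ
  have hg : ContDiff ℝ ∞ fun p => χ p * χ p * (s p * (E p * E p)) := hχ2.mul hU
  have hF : ∀ j, ContDiff ℝ ∞ fun p => XD J j s p + B j p := fun j => (contDiff_XD J j hs).add (hB j)
  set a : GrpPt n m → ℝ := fun p => χ p * E p * s p with ha
  set c : Fin (2*n) → GrpPt n m → ℝ := fun j p => XD J j χ p * E p * s p with hc
  set d : Fin (2*n) → GrpPt n m → ℝ := fun j p => χ p * E p * (B j p - b j p * s p) with hd
  set Y : Fin (2*n) → GrpPt n m → ℝ := fun j p => χ p * E p * (XD J j s p + b j p * s p) with hY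
  have hXg : ∀ j p, (XD J j s p + B j p) * XD J j (fun p => χ p * χ p * (s p * (E p * E p))) p
      = Y j p ^ 2 + 2 * c j p * Y j p + 2 * d j p * c j p + d j p * Y j p := by
    intro j p
    rw [XD_mul J j (hχ2.differentiable (by simp) p) (hU.differentiable (by simp) p),
      XD_mul J j (hχ.differentiable (by simp) p) (hχ.differentiable (by simp) p),
      XD_mul J j (hs.differentiable (by simp) p) (hEEs.differentiable (by simp) p), hXEE]
    simp only [hY, hc, hd]
    ring
  have hac : HasCompactSupport a := (hχc.mul_right (f' := E)).mul_right (f' := s)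
  have hcc : ∀ j, HasCompactSupport (c j) := fun j =>
    ((XD_hasCompactSupport J j hχc).mul_right (f' := E)).mul_right (f' := s)
  have hdc : ∀ j, HasCompactSupport (d j) := fun j => (hχc.mul_right (f' := E)).mul_right
  have haC : Continuous a := ((hχ.mul hEs).mul hs).continuous
  have hcC : ∀ j, Continuous (c j) := fun j => (((contDiff_XD J j hχ).mul hEs).mul hs).continuous
  have hdC : ∀ j, Continuous (d j) := fun j =>
    ((hχ.mul hEs).mul ((hB j).sub ((hb j).mul hs))).continuous
  have hgc : HasCompactSupport fun p => χ p * χ p * (s p * (E p * E p)) :=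
    (hχc.mul_right (f' := χ)).mul_right
  -- the equation is multiplied by `χ² s E²` and integrated
  have hibp : ∀ j, ∫ p, XD J j (fun q => (XD J j s q + B j q) * (χ q * χ q * (s q * (E q * E q)))) p = 0 :=
    fun j => integral_XD_zero J j (((hF j).mul hg).of_le (by simp)) hgc.mul_left
  have hi1 : ∀ j, Integrable (XD J j (fun q => (XD J j s q + B j q)
      * (χ q * χ q * (s q * (E q * E q))))) := fun j =>
    (contDiff_XD J j ((hF j).mul hg)).continuous.integrable_of_hasCompactSupport
      (XD_hasCompactSupport J j hgc.mul_left)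
  have hsum : ∫ p, ∑ j, XD J j (fun q => (XD J j s q + B j q)
      * (χ q * χ q * (s q * (E q * E q)))) p = 0 := by
    rw [integral_finsetSum _ fun j _ => hi1 j]
    exact Finset.sum_eq_zero fun j _ => hibp j
  have ia := l2_cc haC hac
  have ic := fun j => l2_cc (hcC j) (hcc j)
  have id := fun j => l2_cc (hdC j) (hdc j)
  have hpt : ∀ p, a p ^ 2 - ∑ j, (2 * c j p ^ 2 + 2 * d j p ^ 2) ≤
      ∑ j, XD J j (fun q => (XD J j s q + B j q) * (χ q * χ q * (s q * (E q * E q)))) p := by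
    intro p
    have h1 : ∀ j, XD J j (fun q => (XD J j s q + B j q) * (χ q * χ q * (s q * (E q * E q)))) p
        = XD J j (fun q => XD J j s q + B j q) p * (χ p * χ p * (s p * (E p * E p)))
          + (Y j p ^ 2 + 2 * c j p * Y j p + 2 * d j p * c j p + d j p * Y j p) := by
      intro j
      rw [XD_mul J j ((hF j).differentiable (by simp) p) (hg.differentiable (by simp) p), hXg]
    rw [Finset.sum_congr rfl fun j _ => h1 j, Finset.sum_add_distrib (f := fun j =>
      XD J j (fun q => XD J j s q + B j q) p * (χ p * χ p * (s p * (E p * E p)))),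
      ← Finset.sum_mul, heq]
    have h2 : s p * (χ p * χ p * (s p * (E p * E p))) = a p ^ 2 := by simp only [ha]; ring
    rw [h2, sub_eq_add_neg, ← Finset.sum_neg_distrib]
    gcongr with j
    -- the square of `Y` absorbs the cross terms
    nlinarith [sq_nonneg (2 * Y j p + 2 * c j p + d j p), sq_nonneg (c j p + d j p)]
  have hi3 : ∀ j, Integrable fun p => 2 * c j p ^ 2 + 2 * d j p ^ 2 :=
    fun j => ((ic j).1.const_mul 2).add ((id j).1.const_mul 2)
  have hi2 : Integrable fun p => ∑ j, (2 * c j p ^ 2 + 2 * d j p ^ 2) :=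
    integrable_finsetSum _ fun j _ => hi3 j
  have hle := integral_mono (ia.1.sub hi2) (integrable_finsetSum _ fun j _ => hi1 j) hpt
  rw [hsum, integral_sub' ia.1 hi2, integral_finsetSum _ fun j _ => hi3 j] at hle
  rw [ia.2]
  refine (ENNReal.ofReal_le_ofReal (sub_nonpos.1 hle)).trans ?_
  rw [ENNReal.ofReal_sum_of_nonneg fun j _ => integral_nonneg fun p => by positivity]
  refine Finset.sum_le_sum fun j _ => ?_
  rw [integral_add ((ic j).1.const_mul 2) ((id j).1.const_mul 2), integral_const_mul,
    integral_const_mul, ENNReal.ofReal_add (by positivity) (by positivity),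
    ENNReal.ofReal_mul (by norm_num), ENNReal.ofReal_mul (by norm_num), (ic j).2, (id j).2]
  simp

end Core

/-! ### Vanishing of weak solutions -/

section Core2
open scoped ContDiff Topology

variable {n m : ℕ} {J : Fin m → Matrix (Fin (2*n)) (Fin (2*n)) ℝ}

/-- The estimate `‖χ_R g‖² ≤ 8 ∑ ‖(X_j χ_R) g‖²` for `g = u √w` and a weak solution `u` of
`(T + 1)* u = 0`: the limit of `energy` for mollified solutions as `δ → 0`. The factor `8` comes from
the triangle inequalities separating the terms that vanish in the limit. -/
lemma local_est (hn : 1 ≤ n) (hskew : ∀ k, (J k).transpose = -(J k)) {α : ℝ} (hα : 1 ≤ α)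
    {g0 : GrpPt n m → ℝ} (hg : AEMeasurable g0) (hg2 : l2 g0 ≠ ⊤)
    (hweak : ∀ φ : GrpPt n m → ℝ, ContDiff ℝ ∞ φ → HasCompactSupport φ →
      ∫ p, Real.exp (-(eD α 0 p) / 2) * g0 p *
        (LSub J φ p + ∑ j, bD J α 0 j p * XD J j φ p + φ p) = 0) {R : ℝ} (hR : 0 < R) :
    l2 (fun p => chiR R p * g0 p) ≤ ∑ j, 8 * l2 (fun p => XD J j (chiR R) p * g0 p) := by
  set v : GrpPt n m → ℝ := fun p => Real.exp (-(eD α 0 p) / 2) * g0 p with hv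
  have hemeas : ∀ δ, Measurable (eD (n := n) (m := m) α δ) := fun δ => (continuous_eD hα).measurable
  have hbmeas : ∀ δ j, Measurable (bD (n := n) (m := m) J α δ j) := fun δ j => measurable_bD j
  have hvm : AEMeasurable v := by have := hemeas 0; fun_prop
  have hv2 : l2 v ≠ ⊤ := by
    refine (lt_of_le_of_lt (l2_bdd_mul (M := 1) fun p => ?_)
      (ENNReal.mul_lt_top ENNReal.ofReal_lt_top hg2.lt_top)).ne
    rw [Real.abs_exp, Real.exp_le_one_iff]
    have := eD_nonneg (α := α) le_rfl p
    linarith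
  have hbvm : ∀ j, AEMeasurable fun p => bD J α 0 j p * v p := fun j => by
    have := hbmeas 0 j; fun_prop
  have hbv2 : ∀ j, l2 (fun p => bD J α 0 j p * v p) ≠ ⊤ := by
    intro j
    simp only [hv, ← mul_assoc]
    exact (lt_of_le_of_lt (l2_bdd_mul (bD_sq_wA_le (J := J) hα j))
      (ENNReal.mul_lt_top ENNReal.ofReal_lt_top hg2.lt_top)).ne
  set δ : ℕ → ℝ := fun k => 1 / ((k:ℝ) + 1) with hδ
  have hδ0 : ∀ k, 0 < δ k := fun k => by simp only [hδ]; positivity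
  have hδ1 : ∀ k, δ k ≤ 1 := fun k => by
    simp only [hδ]
    rw [div_le_one (by positivity)]
    linarith [(Nat.cast_nonneg k : (0:ℝ) ≤ k)]
  have hδl : Tendsto δ atTop (𝓝 0) := tendsto_one_div_add_atTop_nhds_zero_nat
  set s : ℕ → GrpPt n m → ℝ := fun k => kop (kerQ J (rhoK n m k)) v with hs
  set B : ℕ → Fin (2*n) → GrpPt n m → ℝ := fun k j =>
    kop (kerQ J (rhoK n m k)) (fun p => bD J α 0 j p * v p) with hB
  have hsl := tendsto_kop_l2 hskew hvm hv2
  have hBl := fun j => tendsto_kop_l2 hskew (hbvm j) (hbv2 j)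
  have hK := fun k => properKer_kerQ (J := J) (rhoK_isMoll (n := n) (m := m) k).smooth
    (rhoK_isMoll k).cpt
  have hsS : ∀ k, ContDiff ℝ ∞ (s k) := fun k => contDiff_kop (hK k) (locInt_of_l2 hvm hv2)
  have hBS : ∀ k j, ContDiff ℝ ∞ (B k j) := fun k j =>
    contDiff_kop (hK k) (locInt_of_l2 (hbvm j) (hbv2 j))
  have hen : ∀ k, _ := fun k => energy (J := J) (α := α) (hδ0 k) (hsS k) (hBS k)
    (contDiff_chiR R) (chiR_cpt hR) fun p => moll_eq hskew (rhoK_isMoll k) (locInt_of_l2 hvm hv2)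
      (fun j => locInt_of_l2 (hbvm j) (hbv2 j)) hweak p
  -- uniform bounds for the multipliers, all supported in `P ≤ 2 R ^ 4`
  set Q : ℝ := Real.exp ((2 * R ^ 4 + 1) ^ (α / 4) / 2) with hQ
  have hQb : ∀ d : ℝ, 0 ≤ d → d ≤ 1 → ∀ p : GrpPt n m, polyP p ≤ 2 * R ^ 4 →
      Real.exp (eD α d p / 2) ≤ Q := by
    intro d h0 h1 p hp
    refine Real.exp_le_exp.2 ?_
    have hP := polyP_nonneg p
    have : eD α d p ≤ (2 * R ^ 4 + 1) ^ (α / 4) :=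
      Real.rpow_le_rpow (by positivity) (by linarith) (by positivity)
    linarith
  have hQ0 : 0 ≤ Q := (Real.exp_pos _).le
  obtain ⟨C, hC0, hC⟩ := exists_XD_chiR_le (n := n) J
  have hb0 : ∀ d : ℝ, 0 ≤ d → d ≤ 1 → ∀ p : GrpPt n m,
      |chiR R p * Real.exp (eD α d p / 2)| ≤ Q := by
    intro d h0 h1 p
    rcases le_total (2 * R ^ 4) (polyP p) with h | h
    · simpa [chiR_zero hR h] using hQ0
    · rw [abs_mul, Real.abs_exp, abs_of_nonneg (chiR_nonneg R p)]
      exact (mul_le_of_le_one_left (Real.exp_pos _).le (chiR_le_one R p)).trans (hQb d h0 h1 p h)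
  have hb1 : ∀ d : ℝ, 0 ≤ d → d ≤ 1 → ∀ j, ∀ p : GrpPt n m,
      |XD J j (chiR R) p * Real.exp (eD α d p / 2)| ≤ C / R * Q := by
    intro d h0 h1 j p
    rcases lt_or_ge (2 * R ^ 4) (polyP p) with h | h
    · rw [XD_chiR_zero hR j h, zero_mul, abs_zero]; positivity
    · rw [abs_mul, Real.abs_exp]
      have := hC R hR j p
      have := hQb d h0 h1 p h
      gcongr
  set M2 : ℝ := Q * (α / 4 * cJ J * (2 * R ^ 4 + 1) ^ ((α - 1) / 4)) with hM2
  have hb2 : ∀ d : ℝ, 0 ≤ d → d ≤ 1 → ∀ j, ∀ p : GrpPt n m,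
      |chiR R p * Real.exp (eD α d p / 2) * bD J α d j p| ≤ M2 := by
    intro d h0 h1 j p
    have hc := cJ_nonneg (J := J)
    rcases le_total (2 * R ^ 4) (polyP p) with h | h
    · rw [chiR_zero hR h, zero_mul, zero_mul, abs_zero]; positivity
    · rw [abs_mul]
      have hP := polyP_nonneg p
      have h2 := hb0 d h0 h1 p
      have h3 := bD_le (J := J) hα h0 j p
      have h4 : (polyP p + d) ^ ((α - 1) / 4) ≤ (2 * R ^ 4 + 1) ^ ((α - 1) / 4) :=
        Real.rpow_le_rpow (by positivity) (by linarith) (by linarith)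
      rw [hM2]
      gcongr
      exact h3.trans (by gcongr)
  have hχm : Measurable (chiR (n := n) (m := m) R) := (contDiff_chiR R).continuous.measurable
  have hXχm : ∀ j, Measurable (XD J j (chiR (n := n) (m := m) R)) := fun j =>
    (contDiff_XD J j (contDiff_chiR R)).continuous.measurable
  have hexpl : ∀ p : GrpPt n m, Tendsto (fun k => Real.exp (eD α (δ k) p / 2)) atTop
      (𝓝 (Real.exp (eD α 0 p / 2))) := fun p =>
    (Real.continuous_exp.tendsto _).comp ((tendsto_eD hα hδl p).div_const 2)
  -- `t2` and `t3` have the same limit, so the commutators `B_j - b_j s` disappear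
  have t0 := tendsto_l2_mul (c := fun k p => chiR R p * Real.exp (eD α (δ k) p / 2))
    (c0 := fun p => chiR R p * Real.exp (eD α 0 p / 2)) hvm
    (fun k => by have := hemeas (δ k); fun_prop) (by have := hemeas 0; fun_prop) hv2 hsl
    (fun k => hb0 _ (hδ0 k).le (hδ1 k)) (hb0 0 le_rfl zero_le_one)
    (ae_of_all _ fun p => (hexpl p).const_mul _)
  have t1 := fun j => tendsto_l2_mul (c := fun k p => XD J j (chiR R) p * Real.exp (eD α (δ k) p / 2))
    (c0 := fun p => XD J j (chiR R) p * Real.exp (eD α 0 p / 2)) hvm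
    (fun k => by have := hemeas (δ k); have := hXχm j; fun_prop)
    (by have := hemeas 0; have := hXχm j; fun_prop) hv2 hsl
    (fun k => hb1 _ (hδ0 k).le (hδ1 k) j) (hb1 0 le_rfl zero_le_one j)
    (ae_of_all _ fun p => (hexpl p).const_mul _)
  have t2 := fun j => tendsto_l2_mul (c := fun k p => chiR R p * Real.exp (eD α (δ k) p / 2))
    (c0 := fun p => chiR R p * Real.exp (eD α 0 p / 2)) (hbvm j)
    (fun k => by have := hemeas (δ k); fun_prop) (by have := hemeas 0; fun_prop) (hbv2 j) (hBl j)
    (fun k => hb0 _ (hδ0 k).le (hδ1 k)) (hb0 0 le_rfl zero_le_one)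
    (ae_of_all _ fun p => (hexpl p).const_mul _)
  have t3 := fun j => tendsto_l2_mul
    (c := fun k p => chiR R p * Real.exp (eD α (δ k) p / 2) * bD J α (δ k) j p)
    (c0 := fun p => chiR R p * Real.exp (eD α 0 p / 2) * bD J α 0 j p) hvm
    (fun k => by have := hemeas (δ k); have := hbmeas (δ k) j; fun_prop)
    (by have := hemeas 0; have := hbmeas 0 j; fun_prop) hv2 hsl
    (fun k => hb2 _ (hδ0 k).le (hδ1 k) j) (hb2 0 le_rfl zero_le_one j)
    (by
      filter_upwards [ae_ne_zero hn] with p hp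
      exact ((hexpl p).const_mul _).mul (tendsto_bD hδl j hp))
  have hcancel : ∀ p : GrpPt n m, ∀ x : ℝ, x * Real.exp (eD α 0 p / 2) * v p = x * g0 p := by
    intro p x
    have h4 : Real.exp (eD α 0 p / 2) * Real.exp (-(eD α 0 p) / 2) = 1 := by
      rw [← Real.exp_add]; ring_nf; simp
    simp only [hv]
    linear_combination x * g0 p * h4
  simp only [hcancel] at t0 t1
  have hsm : ∀ k, Measurable (s k) := fun k => (hsS k).continuous.measurable
  have hBm : ∀ k j, Measurable (B k j) := fun k j => (hBS k j).continuous.measurable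
  -- `energy` with each term compared to its limit
  have hbound : ∀ k, l2 (fun p => chiR R p * g0 p) ≤
      2 * (∑ j, (2 * (2 * l2 (fun p => XD J j (chiR R) p * Real.exp (eD α (δ k) p / 2) * s k p
          - XD J j (chiR R) p * g0 p) + 2 * l2 (fun p => XD J j (chiR R) p * g0 p))
        + 2 * (2 * l2 (fun p => chiR R p * Real.exp (eD α (δ k) p / 2) * B k j p
          - chiR R p * Real.exp (eD α 0 p / 2) * (bD J α 0 j p * v p))
          + 2 * l2 (fun p => chiR R p * Real.exp (eD α (δ k) p / 2) * bD J α (δ k) j p * s k p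
          - chiR R p * Real.exp (eD α 0 p / 2) * bD J α 0 j p * v p))))
      + 2 * l2 (fun p => chiR R p * Real.exp (eD α (δ k) p / 2) * s k p - chiR R p * g0 p) := by
    intro k
    have m1 := hemeas (δ k)
    have m2 := hsm k
    have e0 : (fun p => chiR R p * g0 p) = fun p =>
        chiR R p * Real.exp (eD α (δ k) p / 2) * s k p
        + (chiR R p * g0 p - chiR R p * Real.exp (eD α (δ k) p / 2) * s k p) := by
      funext p; ring
    calc l2 (fun p => chiR R p * g0 p) ≤ 2 * l2 (fun p => chiR R p * Real.exp (eD α (δ k) p / 2) * s k p)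
          + 2 * l2 (fun p => chiR R p * g0 p - chiR R p * Real.exp (eD α (δ k) p / 2) * s k p) := by
          conv_lhs => rw [e0]
          exact l2_add (by fun_prop)
      _ ≤ _ := by
        rw [l2_sub_comm (fun p => chiR R p * g0 p)]
        gcongr
        refine (hen k).trans ?_
        gcongr with j
        · have m3 := hXχm j
          have e1 : (fun p => XD J j (chiR R) p * Real.exp (eD α (δ k) p / 2) * s k p) = fun p =>
              (XD J j (chiR R) p * Real.exp (eD α (δ k) p / 2) * s k p
                - XD J j (chiR R) p * g0 p) + XD J j (chiR R) p * g0 p := by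
            funext p; ring
          conv_lhs => rw [e1]
          exact l2_add (by fun_prop)
        · have m3 := hBm k j
          have m4 := hemeas 0
          have m5 := hbvm j
          have e1 : (fun p => chiR R p * Real.exp (eD α (δ k) p / 2)
              * (B k j p - bD J α (δ k) j p * s k p)) = fun p =>
              (chiR R p * Real.exp (eD α (δ k) p / 2) * B k j p
                - chiR R p * Real.exp (eD α 0 p / 2) * (bD J α 0 j p * v p)) +
              (chiR R p * Real.exp (eD α 0 p / 2) * bD J α 0 j p * v p
                - chiR R p * Real.exp (eD α (δ k) p / 2) * bD J α (δ k) j p * s k p) := by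
            funext p; ring
          rw [e1]
          refine (l2_add (by fun_prop)).trans ?_
          rw [l2_sub_comm (fun p => chiR R p * Real.exp (eD α 0 p / 2) * bD J α 0 j p * v p)]
  have h2 : ∀ {f : ℕ → ℝ≥0∞} {x : ℝ≥0∞}, Tendsto f atTop (𝓝 x) →
      Tendsto (fun k => 2 * f k) atTop (𝓝 (2 * x)) := fun h =>
    ENNReal.Tendsto.const_mul h (Or.inr (by simp))
  have hlim := (h2 (tendsto_finsetSum Finset.univ fun j _ =>
    (h2 ((h2 (t1 j)).add (tendsto_const_nhds (x := 2 * l2 (fun p => XD J j (chiR R) p * g0 p))))).add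
      (h2 ((h2 (t2 j)).add (h2 (t3 j)))))).add (h2 t0)
  refine (ge_of_tendsto' hlim hbound).trans (le_of_eq ?_)
  simp only [mul_zero, zero_add, add_zero, Finset.mul_sum]
  refine Finset.sum_congr rfl fun j _ => ?_
  ring

/-- A real weak solution `u` of `(T + 1)* u = 0` is trivial; here `g0 = u √w`. -/
lemma core (hn : 1 ≤ n) (hskew : ∀ k, (J k).transpose = -(J k)) {α : ℝ} (hα : 1 ≤ α)
    {g0 : GrpPt n m → ℝ} (hg : AEMeasurable g0) (hg2 : l2 g0 ≠ ⊤)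
    (hweak : ∀ φ : GrpPt n m → ℝ, ContDiff ℝ ∞ φ → HasCompactSupport φ →
      ∫ p, Real.exp (-(eD α 0 p) / 2) * g0 p *
        (LSub J φ p + ∑ j, bD J α 0 j p * XD J j φ p + φ p) = 0) :
    g0 =ᵐ[volume] 0 := by
  obtain ⟨C, hC0, hC⟩ := exists_XD_chiR_le (n := n) J
  set R : ℕ → ℝ := fun k => (k:ℝ) + 1 with hRdef
  have hR : ∀ k, 0 < R k := fun k => by simp only [hRdef]; positivity
  have hRl : Tendsto R atTop atTop :=
    tendsto_atTop_add_const_right _ _ tendsto_natCast_atTop_atTop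
  have h1 : ∀ k, l2 (fun p => chiR (R k) p * g0 p) ≤
      ENNReal.ofReal ((C / R k) ^ 2) * (∑ _j : Fin (2*n), 8 * l2 g0) := by
    intro k
    refine (local_est hn hskew hα hg hg2 hweak (hR k)).trans ?_
    rw [Finset.mul_sum]
    refine Finset.sum_le_sum fun j _ => ?_
    rw [mul_left_comm]
    gcongr
    exact l2_bdd_mul (hC (R k) (hR k) j)
  have h2 : Tendsto (fun k => ENNReal.ofReal ((C / R k) ^ 2) * (∑ _j : Fin (2*n), 8 * l2 g0))
      atTop (𝓝 0) := by
    have h3 : Tendsto (fun k => ENNReal.ofReal ((C / R k) ^ 2)) atTop (𝓝 0) := by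
      have := (ENNReal.continuous_ofReal.tendsto _).comp ((hRl.const_div_atTop C).pow 2)
      simpa [Function.comp_def] using this
    have h4 : (∑ _j : Fin (2*n), 8 * l2 g0) ≠ ⊤ := by
      simp only [ne_eq, ENNReal.sum_eq_top, not_exists, not_and]
      exact fun _ _ => ENNReal.mul_ne_top (by simp) hg2
    simpa using ENNReal.Tendsto.mul_const h3 (Or.inr h4)
  have h3 : Tendsto (fun k => l2 (fun p => (1 - chiR (R k) p) * g0 p)) atTop (𝓝 0) := by
    refine l2_dct (G := g0) (fun k => ?_) hg2 (fun k p => ?_) (ae_of_all _ fun p => ?_)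
    · have := (contDiff_chiR (n := n) (m := m) (R k)).continuous.measurable
      fun_prop
    · rw [abs_mul]
      have h5 := chiR_nonneg (R k) p
      have h6 := chiR_le_one (R k) p
      exact mul_le_of_le_one_left (abs_nonneg _) (abs_le.2 ⟨by linarith, by linarith⟩)
    · refine tendsto_const_nhds.congr' ?_
      filter_upwards [hRl.eventually_ge_atTop (polyP p), hRl.eventually_ge_atTop 1] with k hk hk1
      rw [chiR_one (hR k) (hk.trans (le_self_pow₀ hk1 (by norm_num)))]
      simp
  have h4 : l2 g0 ≤ 0 := by
    have h5 : Tendsto (fun k => 2 * (ENNReal.ofReal ((C / R k) ^ 2) * (∑ _j : Fin (2*n), 8 * l2 g0))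
        + 2 * l2 (fun p => (1 - chiR (R k) p) * g0 p)) atTop (𝓝 0) := by
      simpa using (ENNReal.Tendsto.const_mul h2 (Or.inr (by simp : (2:ℝ≥0∞) ≠ ⊤))).add
        (ENNReal.Tendsto.const_mul h3 (Or.inr (by simp : (2:ℝ≥0∞) ≠ ⊤)))
    refine ge_of_tendsto' h5 fun k => ?_
    have e : g0 = fun p => chiR (R k) p * g0 p + (1 - chiR (R k) p) * g0 p := by
      funext p; ring
    have hm := (contDiff_chiR (n := n) (m := m) (R k)).continuous.measurable
    calc l2 g0 = l2 fun p => chiR (R k) p * g0 p + (1 - chiR (R k) p) * g0 p := by rw [← e]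
      _ ≤ _ := l2_add (by fun_prop)
      _ ≤ _ := by
        gcongr
        exact h1 k
  have h5 : l2 g0 = 0 := le_antisymm h4 (by simp)
  rw [l2, lintegral_eq_zero_iff' (by fun_prop)] at h5
  filter_upwards [h5] with p hp
  simpa using hp

end Core2

/-! ### A criterion for essential self-adjointness -/

section Abstract
open scoped Topology

variable {H : Type*} [NormedAddCommGroup H] [InnerProductSpace ℂ H]

/-- `T + 1` is bounded below by one when `T` is nonnegative. -/
lemma norm_le_of_nonneg {T : H →ₗ.[ℂ] H} (hpos : ∀ u : T.domain, 0 ≤ (inner ℂ (T u) (u : H)).re)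
    (u : T.domain) : ‖(u : H)‖ ≤ ‖T u + (u : H)‖ := by
  have h1 := norm_add_sq (𝕜 := ℂ) (T u) (u : H)
  have h2 := hpos u
  simp only [RCLike.re_to_complex] at h1
  refine le_of_sq_le_sq ?_ (norm_nonneg _)
  nlinarith [sq_nonneg ‖T u‖]

/-- If `T + 1` has dense range for a densely defined nonnegative symmetric operator `T`, then every
vector of the domain of `T†` is a graph-norm limit of vectors of the domain of `T`. -/
lemma exists_seq_adjoint [CompleteSpace H] {T : H →ₗ.[ℂ] H} (hd : Dense (T.domain : Set H))
    (hsym : T.IsFormalAdjoint T) (hpos : ∀ u : T.domain, 0 ≤ (inner ℂ (T u) (u : H)).re)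
    (hrange : ∀ h : H, (∀ u : T.domain, inner ℂ h (T u + (u : H)) = 0) → h = 0)
    (y : T.adjoint.domain) : ∃ z : ℕ → T.domain, Tendsto (fun k => (z k : H)) atTop (𝓝 y) ∧
      Tendsto (fun k => T (z k)) atTop (𝓝 (T.adjoint y)) := by
  set S : T.domain →ₗ[ℂ] H := T.toFun + T.domain.subtype with hS
  have hSa : ∀ u, S u = T u + (u : H) := fun u => rfl
  have hdense : (LinearMap.range S).topologicalClosure = ⊤ := by
    rw [Submodule.topologicalClosure_eq_top_iff, Submodule.eq_bot_iff]
    intro h hh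
    refine hrange h fun u => ?_
    rw [Submodule.mem_orthogonal'] at hh
    exact hh _ ⟨u, hSa u⟩
  have hmem : (T.adjoint y + (y : H)) ∈ closure (LinearMap.range S : Set H) := by
    rw [← Submodule.topologicalClosure_coe, hdense]; trivial
  obtain ⟨v, hv, hvl⟩ := mem_closure_iff_seq_limit.1 hmem
  choose z hz using hv
  -- `T + 1` is bounded below, so preimages of a convergent sequence are Cauchy
  have hc : CauchySeq fun k => (z k : H) := by
    have h1 := hvl.cauchySeq
    rw [Metric.cauchySeq_iff] at h1 ⊢
    intro ε hε
    obtain ⟨N, hN⟩ := h1 ε hε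
    refine ⟨N, fun a ha b hb => lt_of_le_of_lt ?_ (hN a ha b hb)⟩
    rw [dist_eq_norm, dist_eq_norm, ← hz, ← hz, ← map_sub, hSa]
    simpa using norm_le_of_nonneg hpos (z a - z b)
  obtain ⟨z0, hz0⟩ := cauchySeq_tendsto_of_complete hc
  have hTz : Tendsto (fun k => T (z k)) atTop (𝓝 (T.adjoint y + (y : H) - z0)) := by
    refine (hvl.sub hz0).congr fun k => ?_
    rw [← hz, hSa]; abel
  have hadj := LinearPMap.adjoint_isFormalAdjoint hd
  -- `y - z0` solves `(T† + 1) (y - z0) = 0`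
  have hy : (y : H) - z0 = 0 := by
    refine hrange _ fun x => ?_
    have h1 : inner ℂ (T.adjoint y + (y : H) - z0) (x : H) = inner ℂ z0 (T x) := by
      refine tendsto_nhds_unique (hTz.inner tendsto_const_nhds) ?_
      simp only [hsym _ x]
      exact hz0.inner tendsto_const_nhds
    have h2 := hadj y x
    simp only [inner_sub_left, inner_add_left, inner_add_right] at h1 ⊢
    rw [← h2, ← h1]; ring
  have hy' : (y : H) = z0 := sub_eq_zero.1 hy
  refine ⟨z, hy' ▸ hz0, ?_⟩
  simpa [← hy'] using hTz

/-- Criterion for essential self-adjointness of a nonnegative symmetric operator. -/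
lemma isSelfAdjoint_adjoint [CompleteSpace H] {T : H →ₗ.[ℂ] H} (hd : Dense (T.domain : Set H))
    (hsym : T.IsFormalAdjoint T) (hpos : ∀ u : T.domain, 0 ≤ (inner ℂ (T u) (u : H)).re)
    (hrange : ∀ h : H, (∀ u : T.domain, inner ℂ h (T u + (u : H)) = 0) → h = 0) :
    IsSelfAdjoint T.adjoint := by
  have hadj := LinearPMap.adjoint_isFormalAdjoint hd
  have hle : T ≤ T.adjoint := hsym.le_adjoint hd
  have hd' : Dense (T.adjoint.domain : Set H) := hd.mono hle.1
  have hAs : T.adjoint.IsFormalAdjoint T.adjoint := by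
    intro x y
    obtain ⟨z, hz, hTz⟩ := exists_seq_adjoint hd hsym hpos hrange x
    refine tendsto_nhds_unique (hTz.inner (tendsto_const_nhds (x := (y : H)))) ?_
    simp only [hadj.symm _ y]
    exact hz.inner tendsto_const_nhds
  rw [LinearPMap.isSelfAdjoint_def]
  refine le_antisymm ?_ (hAs.le_adjoint hd')
  refine LinearPMap.IsFormalAdjoint.le_adjoint hd ?_
  intro x y
  have h1 := (LinearPMap.adjoint_isFormalAdjoint hd').symm ⟨x, hle.1 x.2⟩ y
  rw [← h1]
  congr 1
  exact hle.2 rfl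

end Abstract

/-! ### The Dirichlet form -/

section Dirichlet
open scoped ContDiff Topology ComplexConjugate

variable {n m : ℕ} {J : Fin m → Matrix (Fin (2*n)) (Fin (2*n)) ℝ}

/-- A bound of the weighted drift that is uniform for `δ ∈ [0, 1]`. -/
lemma weight_drift_le {α δ : ℝ} (hα : 1 ≤ α) (hδ : 0 ≤ δ) (hδ1 : δ ≤ 1) (j : Fin (2*n))
    (p : GrpPt n m) :
    |Real.exp (-(eD α δ p)) * bD J α δ j p| ≤ α / 4 * cJ J * (polyP p + 1) ^ ((α - 1) / 4) := by
  have hP := polyP_nonneg p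
  have hc := cJ_nonneg (J := J)
  rw [abs_mul, abs_of_pos (Real.exp_pos _)]
  have h1 : Real.exp (-(eD α δ p)) ≤ 1 := Real.exp_le_one_iff.2 (by linarith [eD_nonneg (α := α) hδ p])
  calc _ ≤ 1 * |bD J α δ j p| := by gcongr
    _ ≤ α / 4 * cJ J * (polyP p + δ) ^ ((α - 1) / 4) := by rw [one_mul]; exact bD_le hα hδ j p
    _ ≤ _ := by gcongr

lemma integrable_dom {α : ℝ} (hα : 1 ≤ α) {F : GrpPt n m → ℂ} (hF : Continuous F)
    (hc : HasCompactSupport F) :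
    Integrable fun p => α / 4 * cJ J * (polyP p + 1) ^ ((α - 1) / 4) * ‖F p‖ := by
  refine Continuous.integrable_of_hasCompactSupport ?_ hc.norm.mul_left
  have h : Continuous fun p : GrpPt n m => (polyP p + 1) ^ ((α - 1) / 4) :=
    (contDiff_polyP.continuous.add_const 1).rpow_const fun p => Or.inr (by linarith)
  exact (continuous_const.mul h).mul hF.norm

lemma integrable_drift {α δ : ℝ} (hα : 1 ≤ α) (hδ : 0 ≤ δ) (hδ1 : δ ≤ 1) (j : Fin (2*n))
    {F : GrpPt n m → ℂ} (hF : Continuous F) (hc : HasCompactSupport F) :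
    Integrable fun p => (Real.exp (-(eD α δ p)) * bD J α δ j p) • F p := by
  refine (integrable_dom (J := J) hα hF hc).mono' ?_ (ae_of_all _ fun p => ?_)
  · have h1 := measurable_bD (J := J) (α := α) (δ := δ) j
    have h2 := (continuous_eD (n := n) (m := m) (δ := δ) hα).measurable
    have h3 : Measurable fun p => Real.exp (-(eD α δ p)) * bD J α δ j p := by fun_prop
    exact h3.aestronglyMeasurable.smul hF.aestronglyMeasurable
  · rw [norm_smul]
    gcongr
    exact weight_drift_le hα hδ hδ1 j p

lemma integrable_weight {α δ : ℝ} (hα : 1 ≤ α)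
    {F : GrpPt n m → ℂ} (hF : Continuous F) (hc : HasCompactSupport F) :
    Integrable fun p => Real.exp (-(eD α δ p)) • F p :=
  ((continuous_eD hα).neg.rexp.smul hF).integrable_of_hasCompactSupport hc.smul_left

/-- Integration by parts against the weight, first for the smooth regularized weight. -/
lemma ibp_reg {α δ : ℝ} (hα : 1 ≤ α) (hδ : 0 < δ) (hδ1 : δ ≤ 1) (j : Fin (2*n))
    {F : GrpPt n m → ℂ} (hF : ContDiff ℝ ∞ F) (hc : HasCompactSupport F) :
    ∫ p, (Real.exp (-(eD α δ p)) * bD J α δ j p) • F p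
      = ∫ p, Real.exp (-(eD α δ p)) • XD J j F p := by
  have hw : ContDiff ℝ ∞ fun p : GrpPt n m => Real.exp (-1 * eD α δ p) :=
    (contDiff_const.mul (contDiff_eD hδ)).exp
  have hs : HasCompactSupport fun p : GrpPt n m => Real.exp (-1 * eD α δ p) • F p :=
    hc.smul_left (f := fun p => Real.exp (-1 * eD α δ p))
  have hs' : ContDiff ℝ 1 fun p : GrpPt n m => Real.exp (-1 * eD α δ p) • F p :=
    (hw.smul hF).of_le (by exact_mod_cast le_top)
  have h0 := integral_XD_zero J j hs' hs
  have h1 : ∀ p, XD J j (fun p => Real.exp (-1 * eD α δ p) • F p) p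
      = Real.exp (-(eD α δ p)) • XD J j F p - (Real.exp (-(eD α δ p)) * bD J α δ j p) • F p := by
    intro p
    have e := XD_smul J j (c := fun p => Real.exp (-1 * eD α δ p)) (f := F)
      (hw.differentiable (by simp) p) (hF.differentiable (by simp) p)
    rw [e, XD_exp_eD hδ]
    simp only [neg_mul, one_mul, mul_neg, neg_smul]
    abel
  simp only [h1] at h0
  rw [integral_sub (integrable_weight hα (contDiff_XD J j hF).continuous
    (XD_hasCompactSupport J j hc)) (integrable_drift hα hδ.le hδ1 j hF.continuous hc)] at h0
  exact (sub_eq_zero.1 h0).symm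

/-- Integration by parts against the weight `w_α`: its drift coefficient is `-X_j w_α / w_α`. -/
lemma ibp_weight (hn : 1 ≤ n) {α : ℝ} (hα : 1 ≤ α) (j : Fin (2*n))
    {F : GrpPt n m → ℂ} (hF : ContDiff ℝ ∞ F) (hc : HasCompactSupport F) :
    ∫ p, (Real.exp (-(eD α 0 p)) * bD J α 0 j p) • F p
      = ∫ p, Real.exp (-(eD α 0 p)) • XD J j F p := by
  set δ : ℕ → ℝ := fun k => 1 / ((k : ℝ) + 1) with hδ
  have hδ0 : Tendsto δ atTop (𝓝 0) := tendsto_one_div_add_atTop_nhds_zero_nat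
  have hp : ∀ k, 0 < δ k := fun k => by positivity
  have h1 : ∀ k, δ k ≤ 1 := fun k => by
    rw [hδ]; simp only
    rw [div_le_one (by positivity)]; linarith [(Nat.cast_nonneg k : (0:ℝ) ≤ k)]
  have hw : ∀ p : GrpPt n m, Tendsto (fun k => Real.exp (-(eD α (δ k) p))) atTop
      (𝓝 (Real.exp (-(eD α 0 p)))) := fun p => (tendsto_eD hα hδ0 p).neg.rexp
  have hX := (contDiff_XD J j hF).continuous
  have hXc := XD_hasCompactSupport J j hc
  have hL : Tendsto (fun k => ∫ p, (Real.exp (-(eD α (δ k) p)) * bD J α (δ k) j p) • F p) atTop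
      (𝓝 (∫ p, (Real.exp (-(eD α 0 p)) * bD J α 0 j p) • F p)) := by
    refine tendsto_integral_of_dominated_convergence _
      (fun k => (integrable_drift hα (hp k).le (h1 k) j hF.continuous hc).aestronglyMeasurable)
      (integrable_dom (J := J) hα hF.continuous hc) (fun k => ae_of_all _ fun p => ?_) ?_
    · rw [norm_smul]
      gcongr
      exact weight_drift_le hα (hp k).le (h1 k) j p
    · filter_upwards [ae_ne_zero hn] with p hp0
      exact ((hw p).mul (tendsto_bD hδ0 j hp0)).smul_const _
  have hR : Tendsto (fun k => ∫ p, Real.exp (-(eD α (δ k) p)) • XD J j F p) atTop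
      (𝓝 (∫ p, Real.exp (-(eD α 0 p)) • XD J j F p)) := by
    refine tendsto_integral_of_dominated_convergence (fun p => ‖XD J j F p‖)
      (fun k => (integrable_weight hα hX hXc).aestronglyMeasurable)
      (hX.norm.integrable_of_hasCompactSupport hXc.norm) (fun k => ae_of_all _ fun p => ?_)
      (ae_of_all _ fun p => (hw p).smul_const _)
    rw [norm_smul, Real.norm_of_nonneg (Real.exp_pos _).le]
    exact mul_le_of_le_one_left (norm_nonneg _)
      (Real.exp_le_one_iff.2 (by linarith [eD_nonneg (α := α) (hp k).le p]))
  refine tendsto_nhds_unique hL (hR.congr fun k => ?_)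
  exact (ibp_reg hα (hp k) (h1 k) j hF hc).symm

variable (J) in
/-- The weighted sub-Laplacian, with the drift written through `bD`. -/
def opW (α : ℝ) (φ : GrpPt n m → ℂ) (p : GrpPt n m) : ℂ :=
  LSub J φ p + ∑ j, bD J α 0 j p • XD J j φ p

variable (J) in
/-- The Dirichlet form `∫ ∑ j, conj (X_j φ) (X_j ψ) w_α` of the weighted sub-Laplacian. -/
def dirF (α : ℝ) (φ ψ : GrpPt n m → ℂ) : ℂ :=
  ∑ j, ∫ p, Real.exp (-(eD α 0 p)) • (conj (XD J j φ p) * XD J j ψ p)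

lemma XD_conj (j : Fin (2*n)) {f : GrpPt n m → ℂ} {p : GrpPt n m} (hf : DifferentiableAt ℝ f p) :
    XD J j (fun q => conj (f q)) p = conj (XD J j f p) := by
  rw [XD_eq, XD_eq]
  have := (Complex.conjCLE.toContinuousLinearMap.hasFDerivAt (x := f p)).comp p hf.hasFDerivAt
  have h2 : fderiv ℝ (fun q => conj (f q)) p
      = Complex.conjCLE.toContinuousLinearMap.comp (fderiv ℝ f p) := this.fderiv
  rw [h2]; simp

lemma XD_ofReal (j : Fin (2*n)) {f : GrpPt n m → ℝ} {p : GrpPt n m} (hf : DifferentiableAt ℝ f p) :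
    XD J j (fun q => (f q : ℂ)) p = ((XD J j f p : ℝ) : ℂ) := by
  rw [XD_eq, XD_eq]
  have := (Complex.ofRealCLM.hasFDerivAt (x := f p)).comp p hf.hasFDerivAt
  have h2 : fderiv ℝ (fun q => (f q : ℂ)) p
      = Complex.ofRealCLM.comp (fderiv ℝ f p) := this.fderiv
  rw [h2]; simp

lemma contDiff_conj {f : GrpPt n m → ℂ} (hf : ContDiff ℝ ∞ f) :
    ContDiff ℝ ∞ fun q => conj (f q) :=
  Complex.conjCLE.contDiff.comp hf

/-- Green's formula `⟪Tφ, ψ⟫ = ∫ ∑ j, conj (X_j φ) (X_j ψ) w_α` on test functions. -/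
lemma green (hn : 1 ≤ n) {α : ℝ} (hα : 1 ≤ α) {φ ψ : GrpPt n m → ℂ} (hφ : ContDiff ℝ ∞ φ)
    (hψ : ContDiff ℝ ∞ ψ) (hψc : HasCompactSupport ψ) :
    ∫ p, Real.exp (-(eD α 0 p)) • (ψ p * conj (opW J α φ p)) = dirF J α φ ψ := by
  have hXφ := fun j => contDiff_XD J j hφ
  have hXψ := fun j => contDiff_XD J j hψ
  set F : Fin (2*n) → GrpPt n m → ℂ := fun j p => conj (XD J j φ p) * ψ p with hFd
  have hF : ∀ j, ContDiff ℝ ∞ (F j) := fun j => (contDiff_conj (hXφ j)).mul hψ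
  have hFc : ∀ j, HasCompactSupport (F j) := fun j => hψc.mul_left
  have hXF : ∀ j p, XD J j (F j) p
      = conj (XD J j (XD J j φ) p) * ψ p + conj (XD J j φ p) * XD J j ψ p := by
    intro j p
    have hd := (hXφ j).differentiable (by simp) p
    rw [hFd, XD_mul J j ((contDiff_conj (hXφ j)).differentiable (by simp) p)
      (hψ.differentiable (by simp) p), XD_conj j hd]
  have hi1 := fun j => integrable_drift (J := J) hα le_rfl zero_le_one j (hF j).continuous (hFc j)
  have hi2 := fun j => integrable_weight (δ := 0) hα (contDiff_XD J j (hF j)).continuous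
    (XD_hasCompactSupport J j (hFc j))
  have hi3 : ∀ j, Integrable fun p => Real.exp (-(eD α 0 p)) • (conj (XD J j φ p) * XD J j ψ p) :=
    fun j => integrable_weight hα ((contDiff_conj (hXφ j)).mul (hXψ j)).continuous
      (XD_hasCompactSupport J j hψc).mul_left
  have h1 : ∀ p, Real.exp (-(eD α 0 p)) • (ψ p * conj (opW J α φ p))
      = ∑ j, ((Real.exp (-(eD α 0 p)) * bD J α 0 j p) • F j p - Real.exp (-(eD α 0 p)) • XD J j (F j) p
        + Real.exp (-(eD α 0 p)) • (conj (XD J j φ p) * XD J j ψ p)) := by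
    intro p
    simp only [hXF]
    simp only [hFd, opW, LSub, map_add, map_neg, map_sum, Complex.real_smul, map_mul,
      Complex.conj_ofReal]
    rw [← Finset.sum_neg_distrib, ← Finset.sum_add_distrib, Finset.mul_sum, Finset.mul_sum]
    refine Finset.sum_congr rfl fun j _ => ?_
    push_cast; ring
  have hi4 : ∀ j, Integrable fun p => (Real.exp (-(eD α 0 p)) * bD J α 0 j p) • F j p
      - Real.exp (-(eD α 0 p)) • XD J j (F j) p := fun j => (hi1 j).sub (hi2 j)
  have hi5 : ∀ j, Integrable fun p => (Real.exp (-(eD α 0 p)) * bD J α 0 j p) • F j p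
      - Real.exp (-(eD α 0 p)) • XD J j (F j) p
      + Real.exp (-(eD α 0 p)) • (conj (XD J j φ p) * XD J j ψ p) := fun j => (hi4 j).add (hi3 j)
  simp only [h1]
  rw [integral_finsetSum _ fun j _ => hi5 j, dirF]
  refine Finset.sum_congr rfl fun j _ => ?_
  rw [integral_add (hi4 j) (hi3 j), integral_sub (hi1 j) (hi2 j),
    ibp_weight hn hα j (hF j) (hFc j)]
  ring

lemma dirF_conj (α : ℝ) (φ ψ : GrpPt n m → ℂ) : conj (dirF J α φ ψ) = dirF J α ψ φ := by
  simp only [dirF, map_sum, ← integral_conj]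
  refine Finset.sum_congr rfl fun j _ => integral_congr_ae (ae_of_all _ fun p => ?_)
  simp only [Complex.real_smul, map_mul, Complex.conj_ofReal, Complex.conj_conj]
  ring

lemma dirF_nonneg (α : ℝ) (φ : GrpPt n m → ℂ) : 0 ≤ (dirF J α φ φ).re := by
  rw [dirF, Complex.re_sum]
  refine Finset.sum_nonneg fun j _ => ?_
  have : ∀ p, Real.exp (-(eD α 0 p)) • (conj (XD J j φ p) * XD J j φ p)
      = ((Real.exp (-(eD α 0 p)) * Complex.normSq (XD J j φ p) : ℝ) : ℂ) := by
    intro p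
    rw [mul_comm (conj _), Complex.mul_conj]; simp
  simp only [this, integral_complex_ofReal, Complex.ofReal_re]
  exact integral_nonneg fun p => mul_nonneg (Real.exp_pos _).le (Complex.normSq_nonneg _)

end Dirichlet

/-! ### The operator on `L²(w_α dy)` -/

section Concrete
open scoped ContDiff Topology ComplexConjugate

variable {n m : ℕ} {J : Fin m → Matrix (Fin (2*n)) (Fin (2*n)) ℝ}

lemma continuous_wA {α : ℝ} (hα : 1 ≤ α) : Continuous (wA (n := n) (m := m) α) := by
  have : wA (n := n) (m := m) α = fun p => Real.exp (-(eD α 0 p)) := funext (wA_eD α)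
  rw [this]
  exact (continuous_eD hα).neg.rexp

lemma integral_wMeasure {α : ℝ} (hα : 1 ≤ α) {E : Type*} [NormedAddCommGroup E] [NormedSpace ℝ E]
    (f : GrpPt n m → E) :
    ∫ p, f p ∂(wMeasure (wA α)) = ∫ p, Real.exp (-(eD α 0 p)) • f p := by
  rw [wMeasure, integral_withDensity_eq_integral_toReal_smul
    (continuous_wA hα).measurable.ennreal_ofReal (ae_of_all _ fun _ => ENNReal.ofReal_lt_top)]
  refine integral_congr_ae (ae_of_all _ fun p => ?_)
  simp only
  rw [wA_eD, ENNReal.toReal_ofReal (Real.exp_pos _).le]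

lemma wMeasure_ac (w : GrpPt n m → ℝ) : wMeasure w ≪ (volume : Measure (GrpPt n m)) :=
  withDensity_absolutelyContinuous _ _

/-- The weight is positive, so `w_α dy`-null sets are Lebesgue null. -/
lemma ac_wMeasure {α : ℝ} (hα : 1 ≤ α) :
    (volume : Measure (GrpPt n m)) ≪ wMeasure (wA (n := n) (m := m) α) :=
  withDensity_absolutelyContinuous' (continuous_wA hα).measurable.ennreal_ofReal.aemeasurable
    (ae_of_all _ fun p => by simp [wA, Real.exp_pos])

lemma fmc_wMeasure {α : ℝ} (hα : 1 ≤ α) :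
    IsFiniteMeasureOnCompacts (wMeasure (wA (n := n) (m := m) α)) := by
  have : IsLocallyFiniteMeasure (wMeasure (wA (n := n) (m := m) α)) :=
    IsLocallyFiniteMeasure.withDensity_ofReal (continuous_wA hα)
  infer_instance

/-- Off the origin, the drift written with `∇_H N` is the one of `opW`. -/
lemma action_eq {α : ℝ} {p : GrpPt n m} (hp : p ≠ 0) (φ : GrpPt n m → ℂ) :
    LSub J φ p + (α * kN p ^ (α - 1)) • ∑ j, XD J j kN p • XD J j φ p = opW J α φ p := by
  rw [opW, Finset.smul_sum]
  congr 1
  refine Finset.sum_congr rfl fun j _ => ?_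
  rw [smul_smul, drift_eq j hp]

/-- For a real test function, the operator is real. -/
lemma opW_ofReal {α : ℝ} {φ : GrpPt n m → ℝ} (hφ : ContDiff ℝ ∞ φ) (p : GrpPt n m) :
    opW J α (fun q => (φ q : ℂ)) p
      = ((LSub J φ p + ∑ j, bD J α 0 j p * XD J j φ p : ℝ) : ℂ) := by
  have h1 : ∀ j, XD J j (fun q => (φ q : ℂ)) = fun q => ((XD J j φ q : ℝ) : ℂ) := fun j =>
    funext fun q => XD_ofReal j (hφ.differentiable (by simp) q)
  have h2 : ∀ j, XD J j (fun q => ((XD J j φ q : ℝ) : ℂ)) p = ((XD J j (XD J j φ) p : ℝ) : ℂ) :=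
    fun j => XD_ofReal j ((contDiff_XD J j hφ).differentiable (by simp) p)
  simp only [opW, LSub, h1, h2]
  push_cast
  simp

/-- A real function in `L²(w_α dy)` that solves the weak equation `(T + 1)* h = 0` vanishes. -/
lemma core_wMeasure (hn : 1 ≤ n) (hskew : ∀ k, (J k).transpose = -(J k)) {α : ℝ} (hα : 1 ≤ α)
    {h : GrpPt n m → ℝ} (hm : AEMeasurable h)
    (h2 : Integrable (fun p => h p ^ 2) (wMeasure (wA (n := n) (m := m) α)))
    (hweak : ∀ φ : GrpPt n m → ℝ, ContDiff ℝ ∞ φ → HasCompactSupport φ →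
      ∫ p, h p * (LSub J φ p + ∑ j, bD J α 0 j p * XD J j φ p + φ p) ∂(wMeasure (wA α)) = 0) :
    h =ᵐ[volume] 0 := by
  have hexp : ∀ p : GrpPt n m, Real.exp (-(eD α 0 p) / 2) * Real.exp (-(eD α 0 p) / 2)
      = Real.exp (-(eD α 0 p)) := fun p => by rw [← Real.exp_add]; congr 1; ring
  have hce : Continuous fun p : GrpPt n m => Real.exp (-(eD α 0 p) / 2) :=
    ((continuous_eD hα).neg.div_const 2).rexp
  have hg : AEMeasurable fun p => Real.exp (-(eD α 0 p) / 2) * h p := hce.measurable.aemeasurable.mul hm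
  have h_intg : Integrable fun p => Real.exp (-(eD α 0 p)) * h p ^ 2 := by
    rw [wMeasure, integrable_withDensity_iff_integrable_smul'
      (continuous_wA hα).measurable.ennreal_ofReal (ae_of_all _ fun _ => ENNReal.ofReal_lt_top)] at h2
    refine h2.congr (ae_of_all _ fun p => ?_)
    simp only
    rw [wA_eD, ENNReal.toReal_ofReal (Real.exp_pos _).le, smul_eq_mul]
  have key := core hn hskew hα hg ((l2_ne_top_iff hg).2 ?_) ?_
  · filter_upwards [key] with p hp
    exact (mul_eq_zero.1 hp).resolve_left (Real.exp_pos _).ne'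
  · refine h_intg.congr (ae_of_all _ fun p => ?_)
    simp only
    rw [← hexp]; ring
  · intro φ hφ hc
    have := hweak φ hφ hc
    rw [integral_wMeasure hα] at this
    refine Eq.trans (integral_congr_ae (ae_of_all _ fun p => ?_)) this
    simp only [smul_eq_mul]
    rw [← hexp]; ring

/-- The statement for complex-valued functions, by splitting into real and imaginary parts. -/
lemma core_complex (hn : 1 ≤ n) (hskew : ∀ k, (J k).transpose = -(J k)) {α : ℝ} (hα : 1 ≤ α)
    (h : Lp ℂ 2 (wMeasure (wA (n := n) (m := m) α)))
    (h_intg : ∀ φ : GrpPt n m → ℝ, ContDiff ℝ ∞ φ → HasCompactSupport φ →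
      Integrable (fun p => ((LSub J φ p + ∑ j, bD J α 0 j p * XD J j φ p + φ p : ℝ) : ℂ) * conj (h p))
        (wMeasure (wA α)))
    (hweak : ∀ φ : GrpPt n m → ℝ, ContDiff ℝ ∞ φ → HasCompactSupport φ →
      ∫ p, ((LSub J φ p + ∑ j, bD J α 0 j p * XD J j φ p + φ p : ℝ) : ℂ) * conj (h p)
        ∂(wMeasure (wA α)) = 0) :
    h = 0 := by
  have hae : AEStronglyMeasurable (h : GrpPt n m → ℂ) volume :=
    (Lp.aestronglyMeasurable h).mono_ac (ac_wMeasure hα)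
  have hL := Lp.memLp h
  have hre : (fun p => (h p).re) =ᵐ[volume] 0 := by
    refine core_wMeasure hn hskew hα hae.re.aemeasurable hL.re.integrable_sq fun φ hφ hc => ?_
    have h1 := congrArg Complex.re (hweak φ hφ hc)
    have h2 := integral_re (𝕜 := ℂ) (h_intg φ hφ hc)
    simp only [RCLike.re_to_complex] at h2
    rw [← h2] at h1
    rw [Complex.zero_re] at h1
    refine Eq.trans (integral_congr_ae (ae_of_all _ fun p => ?_)) h1
    simp only [Complex.re_ofReal_mul, Complex.conj_re]
    ring
  have him : (fun p => (h p).im) =ᵐ[volume] 0 := by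
    refine core_wMeasure hn hskew hα hae.im.aemeasurable hL.im.integrable_sq fun φ hφ hc => ?_
    have h1 := congrArg Complex.im (hweak φ hφ hc)
    have h2 := integral_im (𝕜 := ℂ) (h_intg φ hφ hc)
    simp only [RCLike.im_to_complex] at h2
    rw [← h2] at h1
    rw [Complex.zero_im] at h1
    rw [← neg_eq_zero, ← integral_neg]
    refine Eq.trans (integral_congr_ae (ae_of_all _ fun p => ?_)) h1
    simp only [Complex.im_ofReal_mul, Complex.conj_im]
    ring
  refine (Lp.eq_zero_iff_ae_eq_zero).2 ((wMeasure_ac _).ae_le ?_)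
  filter_upwards [hre, him] with p h1 h2
  exact Complex.ext h1 h2

end Concrete

/-- For `α ≥ 1` the weighted sub-Laplacian `φ ↦ L φ + α N^{α-1} (∇_H N)·(∇_H φ)` with domain
the (classes of) smooth compactly supported functions is essentially self-adjoint on
`L²(G, w_α dy)`: its adjoint is self-adjoint. -/
theorem weighted_subLaplacian_wAlpha_essentially_selfAdjoint (n m : ℕ)
    (hn : 1 ≤ n) (hm : 1 ≤ m)
    (J : Fin m → Matrix (Fin (2*n)) (Fin (2*n)) ℝ)
    (hskew : ∀ k, (J k).transpose = -(J k))
    (hMet : ∀ t : Fin m → ℝ, t ≠ 0 → IsUnit (∑ k, t k • J k))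
    (α : ℝ) (hα : 1 ≤ α)
    (T : (MeasureTheory.Lp ℂ 2 (wMeasure (wA (n := n) (m := m) α))) →ₗ.[ℂ]
          (MeasureTheory.Lp ℂ 2 (wMeasure (wA (n := n) (m := m) α))))
    (hdom : ∀ u : MeasureTheory.Lp ℂ 2 (wMeasure (wA (n := n) (m := m) α)),
      u ∈ T.domain ↔ ∃ φ : GrpPt n m → ℂ, ContDiff ℝ (⊤ : ℕ∞) φ ∧ HasCompactSupport φ ∧
        (u : GrpPt n m → ℂ) =ᵐ[wMeasure (wA α)] φ)
    (haction : ∀ (u : T.domain) (φ : GrpPt n m → ℂ),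
      ContDiff ℝ (⊤ : ℕ∞) φ → HasCompactSupport φ →
      ((u : MeasureTheory.Lp ℂ 2 (wMeasure (wA (n := n) (m := m) α))) : GrpPt n m → ℂ)
        =ᵐ[wMeasure (wA α)] φ →
      (T u : GrpPt n m → ℂ)
        =ᵐ[wMeasure (wA α)]
          fun y => LSub J φ y + (α * kN y ^ (α - 1)) • ∑ j, XD J j kN y • XD J j φ y) :
    IsSelfAdjoint T.adjoint := by
  have hfin := fmc_wMeasure (n := n) (m := m) hα
  have h0 : ∀ᵐ p ∂(wMeasure (wA (n := n) (m := m) α)), p ≠ 0 := (wMeasure_ac _).ae_le (ae_ne_zero hn)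
  have hact : ∀ (u : T.domain) (φ : GrpPt n m → ℂ), ContDiff ℝ (⊤ : ℕ∞) φ → HasCompactSupport φ →
      ((u : Lp ℂ 2 (wMeasure (wA (n := n) (m := m) α))) : GrpPt n m → ℂ) =ᵐ[wMeasure (wA α)] φ →
      (T u : GrpPt n m → ℂ) =ᵐ[wMeasure (wA α)] opW J α φ := by
    intro u φ hφ hc hu
    filter_upwards [haction u φ hφ hc hu, h0] with p hp hp0
    rw [hp, action_eq hp0]
  have hform : ∀ (u v : T.domain) (φ ψ : GrpPt n m → ℂ), ContDiff ℝ (⊤ : ℕ∞) φ →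
      HasCompactSupport φ → ContDiff ℝ (⊤ : ℕ∞) ψ → HasCompactSupport ψ →
      ((u : Lp ℂ 2 (wMeasure (wA (n := n) (m := m) α))) : GrpPt n m → ℂ) =ᵐ[wMeasure (wA α)] φ →
      ((v : Lp ℂ 2 (wMeasure (wA (n := n) (m := m) α))) : GrpPt n m → ℂ) =ᵐ[wMeasure (wA α)] ψ →
      inner ℂ (T u) (v : Lp ℂ 2 (wMeasure (wA (n := n) (m := m) α))) = dirF J α φ ψ := by
    intro u v φ ψ hφ hφc hψ hψc hu hv
    rw [L2.inner_def, ← green hn hα hφ hψ hψc, ← integral_wMeasure hα]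
    refine integral_congr_ae ?_
    filter_upwards [hact u φ hφ hφc hu, hv] with p h1 h2
    rw [h1, h2]
    simp
  refine isSelfAdjoint_adjoint ?_ ?_ ?_ ?_
  · refine (Lp.dense_hasCompactSupport_contDiff (F := ℂ) (μ := wMeasure (wA (n := n) (m := m) α))
      (p := 2) (by simp)).mono ?_
    rintro u ⟨φ, hu, hc, hφ⟩
    exact (hdom u).2 ⟨φ, hφ, hc, hu⟩
  · intro u v
    obtain ⟨φ, hφ, hφc, hu⟩ := (hdom u).1 u.2
    obtain ⟨ψ, hψ, hψc, hv⟩ := (hdom v).1 v.2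
    rw [hform u v φ ψ hφ hφc hψ hψc hu hv, ← inner_conj_symm,
      hform v u ψ φ hψ hψc hφ hφc hv hu, dirF_conj]
  · intro u
    obtain ⟨φ, hφ, hφc, hu⟩ := (hdom u).1 u.2
    rw [hform u u φ φ hφ hφc hφ hφc hu hu]
    exact dirF_nonneg α φ
  · intro h hh
    have htest : ∀ φ : GrpPt n m → ℝ, ContDiff ℝ (⊤ : ℕ∞) φ → HasCompactSupport φ →
        ∃ u : T.domain, (fun p => inner ℂ (h p) ((T u + (u : Lp ℂ 2 (wMeasure (wA (n := n) (m := m) α))) :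
          Lp ℂ 2 (wMeasure (wA (n := n) (m := m) α))) p)) =ᵐ[wMeasure (wA α)]
          fun p => ((LSub J φ p + ∑ j, bD J α 0 j p * XD J j φ p + φ p : ℝ) : ℂ)
            * (starRingEnd ℂ) (h p) := by
      intro φ hφ hc
      have hφ' : ContDiff ℝ (⊤ : ℕ∞) fun p => (φ p : ℂ) := Complex.ofRealCLM.contDiff.comp hφ
      have hc' : HasCompactSupport fun p => (φ p : ℂ) := hc.comp_left (g := Complex.ofReal) (by simp)
      have hL : MemLp (fun p => (φ p : ℂ)) 2 (wMeasure (wA (n := n) (m := m) α)) :=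
        hφ'.continuous.memLp_of_hasCompactSupport hc'
      refine ⟨⟨hL.toLp _, (hdom _).2 ⟨_, hφ', hc', hL.coeFn_toLp⟩⟩, ?_⟩
      filter_upwards [hact ⟨hL.toLp _, (hdom _).2 ⟨_, hφ', hc', hL.coeFn_toLp⟩⟩ _ hφ' hc'
        hL.coeFn_toLp, hL.coeFn_toLp, Lp.coeFn_add (T ⟨hL.toLp _, (hdom _).2
          ⟨_, hφ', hc', hL.coeFn_toLp⟩⟩) (hL.toLp _)] with p h1 h2 h3
      rw [h3, Pi.add_apply, h1, h2, opW_ofReal hφ]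
      simp
    refine core_complex hn hskew hα h (fun φ hφ hc => ?_) fun φ hφ hc => ?_
    · obtain ⟨u, hu⟩ := htest φ hφ hc
      exact (L2.integrable_inner h _).congr hu
    · obtain ⟨u, hu⟩ := htest φ hφ hc
      rw [← integral_congr_ae hu, ← L2.inner_def]
      exact hh u

end
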